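/- arXiv:1808.03764 — 3 statements merged into one kernel-verified Lean document; each statement's English description precedes it below -/
import Mathlib

section
/- For every n ≥ 0 and for each pattern τ ∈ {132, 213}, Σ_{σ ∈ S_n(τ)} q^{exc(σ)} p^{crs(σ)} = C_n(q,p) as polynomials in q and p, where C_n(q,p) are the q,p-Catalan polynomials of Randrianarivony. -/
open Equiv Finset

/-- Number of crossings of a permutation of `Fin n` (0-indexed version of the
classical definition on `[n] = {1,…,n}`): pairs `(i,j)` with
`i<j<σ(i)<σ(j)` or `σ(i)<σ(j)≤i<j`. -/
def crs {n : ℕ} (σ : Equiv.Perm (Fin n)) : ℕ :=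
  (Finset.univ.filter (fun q : Fin n × Fin n =>
    ((q.1 : ℕ) < q.2 ∧ (q.2 : ℕ) < σ q.1 ∧ (σ q.1 : ℕ) < σ q.2) ∨
    ((σ q.1 : ℕ) < σ q.2 ∧ (σ q.2 : ℕ) ≤ q.1 ∧ (q.1 : ℕ) < q.2))).card

/-- Number of nestings of a permutation of `Fin n`: pairs `(i,j)` with
`i<j<σ(j)<σ(i)` or `σ(j)<σ(i)≤i<j`. -/
def nes {n : ℕ} (σ : Equiv.Perm (Fin n)) : ℕ :=
  (Finset.univ.filter (fun q : Fin n × Fin n =>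
    ((q.1 : ℕ) < q.2 ∧ (q.2 : ℕ) < σ q.2 ∧ (σ q.2 : ℕ) < σ q.1) ∨
    ((σ q.2 : ℕ) < σ q.1 ∧ (σ q.1 : ℕ) ≤ q.1 ∧ (q.1 : ℕ) < q.2))).card

/-- Number of fixed points. -/
def fp {n : ℕ} (σ : Equiv.Perm (Fin n)) : ℕ :=
  (Finset.univ.filter (fun i : Fin n => σ i = i)).card

/-- Number of excedances. -/
def exc {n : ℕ} (σ : Equiv.Perm (Fin n)) : ℕ :=
  (Finset.univ.filter (fun i : Fin n => (i : ℕ) < σ i)).card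

/-- Number of inversions. -/
def invStat {n : ℕ} (σ : Equiv.Perm (Fin n)) : ℕ :=
  (Finset.univ.filter (fun q : Fin n × Fin n => q.1 < q.2 ∧ σ q.2 < σ q.1)).card

/-- `σ` contains the pattern `τ`: there is a strictly increasing choice of positions
on which `σ` is order-isomorphic to `τ`. -/
def Contains {n k : ℕ} (σ : Equiv.Perm (Fin n)) (τ : Equiv.Perm (Fin k)) : Prop :=
  ∃ f : Fin k → Fin n, StrictMono f ∧ ∀ a b : Fin k, σ (f a) < σ (f b) ↔ τ a < τ b

/-- `σ` avoids the pattern `τ`. -/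
def Avoids {n k : ℕ} (σ : Equiv.Perm (Fin n)) (τ : Equiv.Perm (Fin k)) : Prop :=
  ¬ Contains σ τ

/-- The pattern 123 (as a permutation of `Fin 3`, 0-indexed). -/
def p123 : Equiv.Perm (Fin 3) := 1
/-- The pattern 132. -/
def p132 : Equiv.Perm (Fin 3) := Equiv.swap 1 2
/-- The pattern 213. -/
def p213 : Equiv.Perm (Fin 3) := Equiv.swap 0 1
/-- The pattern 321. -/
def p321 : Equiv.Perm (Fin 3) := Equiv.swap 0 2
/-- The pattern 231. -/
def p231 : Equiv.Perm (Fin 3) := Equiv.swap 0 2 * Equiv.swap 0 1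
/-- The pattern 312. -/
def p312 : Equiv.Perm (Fin 3) := Equiv.swap 0 2 * Equiv.swap 1 2

open MvPolynomial in
/-- The q,p-Catalan polynomials of Randrianarivony, as polynomials in two variables
`q = X true` and `p = X false`:
`C 0 = C 1 = 1` and `C (n+2) = C (n+1) + q * Σ_{k=0}^{n} p^k C k C (n+1-k)`. -/
noncomputable def qpCatalan : ℕ → MvPolynomial Bool ℤ
  | 0 => 1
  | 1 => 1
  | n + 2 => qpCatalan (n + 1) + (X true : MvPolynomial Bool ℤ) *
      ∑ k ∈ (Finset.range (n + 1)).attach,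
        (X false : MvPolynomial Bool ℤ) ^ (k : ℕ) * qpCatalan k * qpCatalan (n + 1 - k)
  termination_by n => n
  decreasing_by
  · omega
  · have := Finset.mem_range.mp k.2; omega
  · omega


section FunctionalEquations

/-- Two power series given by functional equations in which the variable `z` is rescaled satisfy,
together, a linear functional equation without rescaling of `z`. Here `ρ` stands for the
substitution `z ↦ p z`, and `σ`, `τ` for the mutually inverse substitutions `s ↦ p s`, `s ↦ s / p`
in an auxiliary variable `s`; `A` and `B` are series in `t z` and `y z`, where `t = q s` and
`y = 1 / s`. -/
theorem linear_equation_of_rescaled_equations {R : Type*} [CommRing R] (ρ σ τ : R →+* R)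
    (hρσ : ∀ x, ρ (σ x) = σ (ρ x)) (hρτ : ∀ x, ρ (τ x) = τ (ρ x))
    {z q p r t y A B G f g : R} (hpr : p * r = 1) (hyt : y * t = q)
    (hz : ρ z = p * z) (hzσ : σ z = z) (hzτ : τ z = z)
    (hq : ρ q = q) (hqσ : σ q = q) (hqτ : τ q = q)
    (hp : ρ p = p) (hpσ : σ p = p) (hpτ : τ p = p)
    (hr : ρ r = r) (hrσ : σ r = r)
    (ht : ρ t = t) (htσ : σ t = p * t) (hy : ρ y = y) (hyτ : τ y = p * y)
    (hA : ρ A = σ A) (hB : ρ B = τ B) (hGσ : σ G = G) (hGτ : τ G = G)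
    (hAeq : A = 1 + z * t * σ A * A) (hBeq : B = 1 + z * y * τ B * B)
    (hGeq : G = z * (1 + G) + z * q * G * (1 + ρ G))
    (hUσ : ∀ e h : R, h = z * e * σ (ρ h) → h = 0)
    (hUτ : ∀ e h : R, h = z * e * τ (ρ h) → h = 0)
    (hU : ∀ e h : R, h = z * e * ρ h → h = 0)
    (hf : f = G * t * σ A * A * (1 + z * q * σ (ρ f)))
    (hg : g = B * (1 + G * (1 + p * z * y * τ B * τ (ρ g)))) :
    f + g = z * t * σ A * (f + g) + B * (1 + z * (q * r * σ f + τ g)) := by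
  have hf₁ := congrArg σ hf
  have hf₂ := congrArg σ hf₁
  have hA₁ := congrArg σ hAeq
  have hg₁ := congrArg τ hg
  have hg₂ := congrArg τ hg₁
  have hB₁ := congrArg τ hBeq
  have hB₂ := congrArg τ hB₁
  simp only [map_mul, map_add, map_one, hzσ, hqσ, hpσ, htσ, hGσ, hzτ, hpτ, hyτ, hGτ]
    at hf₁ hf₂ hA₁ hg₁ hg₂ hB₁ hB₂
  have hGρσ : σ (ρ G) = ρ G := by rw [← hρσ, hGσ]
  have hGρτ : τ (ρ G) = ρ G := by rw [← hρτ, hGτ]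
  have hf_lin : f = t * A * (1 + G + σ f - σ A * (1 + z * q * r * σ (σ f))) := by
    rw [← sub_eq_zero]
    apply hUσ (t * A * q * G * σ A)
    simp only [map_mul, map_add, map_sub, map_one, hzσ, hqσ, hpσ, hrσ, htσ, hz, hq,
      hr, ht, hA, hρσ, hGρσ]
    linear_combination hf - t * A * hf₁ + t * A * σ A * z * q * r * hf₂
      - t * A * p * t * σ (σ A) * σ A * hGeq + t * A * (1 + G) * hA₁
      + t ^ 2 * A * G * σ A * z * q * p * σ (σ (σ A)) * σ (σ A) * hpr
  have hg_lin : q * g = B * (q * (1 + G) + p * y * τ g - p * y * τ B * (1 + z * τ (τ g))) := by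
    rw [← sub_eq_zero]
    apply hUτ (B * p * y * G * τ B)
    simp only [map_mul, map_add, map_sub, map_one, hzτ, hqτ, hpτ, hyτ, hz, hq, hp, hy, hB, hρτ, hGρτ]
    linear_combination q * hg - B * p * y * hg₁ + B * p * y * τ B * z * hg₂
      + B * p * y * τ B * (G * hB₂ - τ (τ B) * hGeq)
  have hf_lin' := congrArg ρ hf_lin
  have hg_lin' := congrArg ρ hg_lin
  simp only [map_mul, map_add, map_sub, map_one, hz, hq, hp, hr, ht, hy, hA, hB, hρσ, hρτ]
    at hf_lin' hg_lin'
  have hf_rel : G * t * σ A * (1 + z * q * σ (ρ f)) - G * z * q * ρ f - z * t * σ A * (1 + G)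
      = z * q * r * σ f := by
    linear_combination - G * z * q * hf_lin' - z * q * r * hf₁ + t * σ A * hGeq
      - G * t * σ A * z * q * σ (σ A) * hpr
  have hg_rel : G + G * p * z * y * τ B * τ (ρ g) - G * z * q * ρ g = z * τ g := by
    linear_combination - G * z * hg_lin' - z * hg₁ + τ B * hGeq - G * hB₁
  have hΔ : (1 - z * t * σ A) * (1 - z * y * τ B) * (f + g) - 1 - z * (q * r * σ f + τ g) = 0 := by
    apply hU (G * q * σ A * τ B)
    simp only [map_mul, map_add, map_sub, map_one, hz, hq, hr, ht, hy, hA, hB, hρσ, hρτ]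
    linear_combination hf_rel + hg_rel
      + (1 - z * y * τ B) * ((1 - z * t * σ A) * hf + G * t * σ A * (1 + z * q * σ (ρ f)) * hAeq)
      + (1 - z * t * σ A) * ((1 - z * y * τ B) * hg
        + (1 + G + G * p * z * y * τ B * τ (ρ g)) * hBeq)
      - G * z * q * (ρ f + ρ g) * (τ B * (1 - p * z * y * τ (τ B)) * hA₁ + hB₁)
      - G * z * σ A * τ B * (1 + z * q * σ (ρ f) + p * z * τ (ρ g)) * hyt
      + G * z ^ 2 * q ^ 2 * σ A * τ B * σ (ρ f) * hpr
  linear_combination B * hΔ - (1 - z * t * σ A) * (f + g) * hBeq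

end FunctionalEquations

section PowerSeriesFixpoint

open PowerSeries

variable {L : Type*} [CommRing L]

theorem PowerSeries.eq_zero_of_forall_X_pow_dvd {h : L⟦X⟧} (hh : ∀ n : ℕ, (X : L⟦X⟧) ^ n ∣ h) :
    h = 0 := by
  ext n
  exact X_pow_dvd_iff.mp (hh (n + 1)) n (Nat.lt_succ_self n)

theorem PowerSeries.X_pow_dvd_map {θ : L⟦X⟧ →+* L⟦X⟧} (hθ : X ∣ θ X) {n : ℕ} {h : L⟦X⟧}
    (hh : X ^ n ∣ h) : X ^ n ∣ θ h :=
  ((pow_dvd_pow_of_dvd hθ n).trans (map_pow θ X n).symm.dvd).trans (map_dvd θ hh)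

theorem PowerSeries.eq_zero_of_eq_X_mul_map {θ : L⟦X⟧ →+* L⟦X⟧} (hθ : X ∣ θ X) {e h : L⟦X⟧}
    (hh : h = X * e * θ h) : h = 0 := by
  refine eq_zero_of_forall_X_pow_dvd fun n => ?_
  induction n with
  | zero => simp
  | succ n ih =>
    rw [hh, pow_succ', mul_assoc]
    exact mul_dvd_mul_left X (Dvd.dvd.mul_left (X_pow_dvd_map hθ ih) e)

/-- A functional equation `h = c + X * e * θ h` has a solution, lying in every coefficientwise
closed set stable under the right-hand side. -/
theorem PowerSeries.exists_eq_add_X_mul_map {θ : L⟦X⟧ →+* L⟦X⟧} (hθ : X ∣ θ X) (c e : L⟦X⟧)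
    {S : Set L⟦X⟧} (h0 : 0 ∈ S) (hS : ∀ x ∈ S, c + X * e * θ x ∈ S)
    (hcl : ∀ x, (∀ n, ∃ y ∈ S, coeff n x = coeff n y) → x ∈ S) :
    ∃ h ∈ S, h = c + X * e * θ h := by
  set Φ : L⟦X⟧ → L⟦X⟧ := fun x => c + X * e * θ x with hΦ
  have hΦsub : ∀ n x y, X ^ n ∣ x - y → X ^ (n + 1) ∣ Φ x - Φ y := fun n x y hxy => by
    have : Φ x - Φ y = X * (e * θ (x - y)) := by simp only [hΦ, map_sub]; ring
    rw [this, pow_succ']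
    exact mul_dvd_mul_left X (Dvd.dvd.mul_left (X_pow_dvd_map hθ hxy) e)
  have hstep : ∀ n k, X ^ n ∣ Φ^[n + k] 0 - Φ^[n] 0 := fun n k => by
    induction n with
    | zero => simp
    | succ n ih =>
      rw [Nat.succ_add, Function.iterate_succ_apply', Function.iterate_succ_apply']
      exact hΦsub _ _ _ ih
  have hmem : ∀ n, Φ^[n] 0 ∈ S := fun n => by
    induction n with
    | zero => exact h0
    | succ n ih => rw [Function.iterate_succ_apply']; exact hS _ ih
  let h : L⟦X⟧ := PowerSeries.mk fun n => coeff n (Φ^[n + 1] 0)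
  have hlim : ∀ n, X ^ n ∣ h - Φ^[n] 0 := fun n => by
    refine X_pow_dvd_iff.mpr fun m hm => ?_
    obtain ⟨k, rfl⟩ := Nat.exists_eq_add_of_lt hm
    have := X_pow_dvd_iff.mp (hstep (m + 1) k) m (Nat.lt_succ_self m)
    rw [map_sub, sub_eq_zero] at this
    rw [map_sub, coeff_mk, sub_eq_zero, ← this, Nat.add_right_comm]
  refine ⟨h, hcl h fun n => ⟨_, hmem (n + 1), coeff_mk _ _⟩, ?_⟩
  rw [← sub_eq_zero]
  refine eq_zero_of_forall_X_pow_dvd fun n => (pow_dvd_pow X n.le_succ).trans ?_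
  have h1 : X ^ (n + 1) ∣ Φ h - Φ^[n + 1] 0 := by
    rw [Function.iterate_succ_apply']
    exact hΦsub n _ _ (hlim n)
  have h2 := dvd_sub (hlim (n + 1)) h1
  rwa [sub_sub_sub_cancel_right] at h2

end PowerSeriesFixpoint

section Laurent

open PowerSeries LaurentPolynomial

variable {K : Type*} [CommRing K]

/-- The substitution `T ↦ u T` on Laurent polynomials. -/
noncomputable def LaurentPolynomial.dilate (u : Kˣ) : K[T;T⁻¹] →+* K[T;T⁻¹] :=
  LaurentPolynomial.eval₂ LaurentPolynomial.C
    (Units.map (LaurentPolynomial.C : K →+* K[T;T⁻¹]).toMonoidHom u *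
      ⟨T 1, T (-1), by rw [← T_add]; simp, by rw [← T_add]; simp⟩)

theorem LaurentPolynomial.dilate_C (u : Kˣ) (a : K) : dilate u (C a) = C a := eval₂_C _ _ _

theorem LaurentPolynomial.dilate_T (u : Kˣ) (d : ℤ) :
    dilate u (T d) = C ((u ^ d : Kˣ) : K) * T d := by
  rw [dilate, eval₂_T, mul_zpow, Units.val_mul, ← map_zpow]
  congr 1
  rcases Int.eq_nat_or_neg d with ⟨n, rfl | rfl⟩
  · simp [T_pow]
  · rw [zpow_neg, ← inv_zpow, zpow_natCast, Units.val_pow_eq_pow_val]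
    simp [T_pow]

theorem LaurentPolynomial.coeff_dilate (u : Kˣ) (x : K[T;T⁻¹]) (d : ℤ) :
    (dilate u x).coeff d = ((u ^ d : Kˣ) : K) * x.coeff d := by
  induction x using LaurentPolynomial.induction_on' with
  | add x y hx hy => simp [hx, hy, mul_add]
  | C_mul_T n a =>
    rw [map_mul, dilate_C, dilate_T, ← mul_assoc, ← map_mul, ← single_eq_C_mul_T,
      ← single_eq_C_mul_T, AddMonoidAlgebra.coeff_single, AddMonoidAlgebra.coeff_single,
      Finsupp.single_apply, Finsupp.single_apply]
    split_ifs with h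
    · rw [h, mul_comm]
    · simp

/-- The power series in `X` over Laurent polynomials in `T` whose coefficient of `X ^ n` only
involves powers of `T` with exponents between `a * n` and `b * n`. -/
def slopeSubring (a b : ℤ) : Subring (K[T;T⁻¹])⟦X⟧ where
  carrier := {h | ∀ (n : ℕ) (d : ℤ), (coeff n h).coeff d ≠ 0 → a * n ≤ d ∧ d ≤ b * n}
  zero_mem' n d h := by simp at h
  one_mem' n d h := by
    rw [coeff_one] at h
    split_ifs at h with h0
    · rw [← map_one LaurentPolynomial.C, LaurentPolynomial.C_apply] at h
      simp_all
    · simp at h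
  add_mem' {x y} hx hy n d h := by
    by_cases h0 : (coeff n x).coeff d = 0
    · exact hy n d (by simpa [h0] using h)
    · exact hx n d h0
  neg_mem' {x} hx n d h := hx n d (by simpa using h)
  mul_mem' {x y} hx hy n d h := by
    rw [coeff_mul, AddMonoidAlgebra.coeff_sum, Finsupp.finsetSum_apply] at h
    obtain ⟨⟨i, j⟩, hij, hne⟩ := Finset.exists_ne_zero_of_sum_ne_zero h
    have := AddMonoidAlgebra.support_coeff_mul_subset _ _ (Finsupp.mem_support_iff.mpr hne)
    obtain ⟨d₁, h₁, d₂, h₂, rfl⟩ := Finset.mem_add.mp this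
    have h₁ := hx _ _ (Finsupp.mem_support_iff.mp h₁)
    have h₂ := hy _ _ (Finsupp.mem_support_iff.mp h₂)
    rw [← Finset.HasAntidiagonal.mem_antidiagonal.mp hij]
    push_cast
    constructor <;> linarith

theorem mem_slopeSubring {a b : ℤ} {h : (K[T;T⁻¹])⟦X⟧} : h ∈ slopeSubring a b ↔
    ∀ (n : ℕ) (d : ℤ), (coeff n h).coeff d ≠ 0 → a * n ≤ d ∧ d ≤ b * n := Iff.rfl

theorem mem_slopeSubring_of_forall_coeff {a b : ℤ} {x : (K[T;T⁻¹])⟦X⟧}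
    (hx : ∀ n, ∃ y ∈ slopeSubring (K := K) a b, coeff n x = coeff n y) : x ∈ slopeSubring a b := by
  intro n d h
  obtain ⟨y, hy, hxy⟩ := hx n
  exact hy n d (hxy ▸ h)

theorem map_mem_slopeSubring {a b : ℤ} (u : Kˣ) {x : (K[T;T⁻¹])⟦X⟧} (hx : x ∈ slopeSubring a b) :
    PowerSeries.map (dilate u) x ∈ slopeSubring a b := by
  intro n d h
  rw [coeff_map, coeff_dilate] at h
  exact hx n d (right_ne_zero_of_mul h)

theorem LaurentPolynomial.coeff_C_mul_T_mul (a : K) (m : ℤ) (x : K[T;T⁻¹]) (d : ℤ) :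
    (LaurentPolynomial.C a * T m * x).coeff d = a * x.coeff (d - m) := by
  rw [← single_eq_C_mul_T, AddMonoidAlgebra.coeff_single_mul_apply, neg_add_eq_sub]

theorem LaurentPolynomial.coeff_C_mul (a : K) (x : K[T;T⁻¹]) (d : ℤ) :
    (LaurentPolynomial.C a * x).coeff d = a * x.coeff d := by
  simpa using coeff_C_mul_T_mul a 0 x d

theorem LaurentPolynomial.coeff_T_mul (m : ℤ) (x : K[T;T⁻¹]) (d : ℤ) :
    (T m * x).coeff d = x.coeff (d - m) := by
  simpa using coeff_C_mul_T_mul 1 m x d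

theorem rescale_mem_slopeSubring {a b : ℤ} (u : K) {x : (K[T;T⁻¹])⟦X⟧}
    (hx : x ∈ slopeSubring a b) :
    PowerSeries.rescale (LaurentPolynomial.C u) x ∈ slopeSubring a b := by
  intro n d h
  rw [coeff_rescale, ← map_pow, LaurentPolynomial.coeff_C_mul] at h
  exact hx n d (right_ne_zero_of_mul h)

theorem C_C_mem_slopeSubring (a b : ℤ) (x : K) :
    PowerSeries.C (LaurentPolynomial.C x) ∈ slopeSubring (K := K) a b := by
  intro n d h
  rw [coeff_C] at h
  split_ifs at h with h0
  · simp_all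
  · simp at h

theorem X_mem_slopeSubring {a b : ℤ} (ha : a ≤ 0) (hb : 0 ≤ b) :
    (PowerSeries.X : (K[T;T⁻¹])⟦X⟧) ∈ slopeSubring (K := K) a b := by
  intro n d h
  rw [coeff_X] at h
  split_ifs at h with h0
  · rw [← map_one LaurentPolynomial.C, LaurentPolynomial.C_apply] at h
    simp_all
  · simp at h

/-- The Catalan numbers weighted by area: `A 0 = 1` and
`A (n + 1) = ∑_{k + m = n} p ^ k * A k * A m`. -/
def areaCatalan (p : K) : ℕ → K
  | 0 => 1
  | n + 1 => ∑ i : Fin n.succ, p ^ (i : ℕ) * areaCatalan p i * areaCatalan p (n - i)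

theorem areaCatalan_zero (p : K) : areaCatalan p 0 = 1 := by rw [areaCatalan]

theorem areaCatalan_succ (p : K) (n : ℕ) : areaCatalan p (n + 1) =
    ∑ x ∈ antidiagonal n, p ^ x.1 * areaCatalan p x.1 * areaCatalan p x.2 := by
  rw [areaCatalan, Finset.Nat.sum_antidiagonal_eq_sum_range_succ_mk, Finset.sum_range]

/-- The series `∑ A n * w ^ n * X ^ n` with `A n` the area-weighted Catalan numbers. -/
noncomputable def areaSeries (p : K) (w : K[T;T⁻¹]) : (K[T;T⁻¹])⟦X⟧ :=
  PowerSeries.mk fun n => LaurentPolynomial.C (areaCatalan p n) * w ^ n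

theorem areaSeries_eq (p : K) (w : K[T;T⁻¹]) : areaSeries p w =
    1 + X * PowerSeries.C w * areaSeries p (LaurentPolynomial.C p * w) * areaSeries p w := by
  ext1 n
  cases n with
  | zero => simp [areaSeries, areaCatalan_zero]
  | succ n =>
    rw [map_add, mul_assoc, mul_assoc, coeff_succ_X_mul, PowerSeries.coeff_C_mul, coeff_mul,
      areaSeries, coeff_mk, areaCatalan_succ, map_sum, Finset.sum_mul, coeff_one,
      if_neg n.succ_ne_zero, zero_add, Finset.mul_sum]
    refine Finset.sum_congr rfl fun x hx => ?_
    rw [areaSeries, coeff_mk, coeff_mk, ← Finset.HasAntidiagonal.mem_antidiagonal.mp hx, map_mul, map_mul,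
      map_pow]
    ring

theorem rescale_areaSeries (p u : K) (w : K[T;T⁻¹]) :
    PowerSeries.rescale (LaurentPolynomial.C u) (areaSeries p w) =
      areaSeries p (LaurentPolynomial.C u * w) := by
  ext1 n
  rw [coeff_rescale, areaSeries, areaSeries, coeff_mk, coeff_mk]
  ring

theorem map_dilate_areaSeries (p : K) (u : Kˣ) (w : K[T;T⁻¹]) :
    PowerSeries.map (dilate u) (areaSeries p w) = areaSeries p (dilate u w) := by
  ext1 n
  rw [coeff_map, areaSeries, areaSeries, coeff_mk, coeff_mk, map_mul, map_pow, dilate_C]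

theorem coeff_areaSeries (p a : K) (m : ℤ) (n : ℕ) :
    coeff n (areaSeries p (LaurentPolynomial.C a * T m)) =
      LaurentPolynomial.C (areaCatalan p n * a ^ n) * T (n * m) := by
  rw [areaSeries, coeff_mk, mul_pow, T_pow, map_mul, map_pow, mul_assoc]

theorem areaSeries_mem_slopeSubring {a b : ℤ} (p u : K) {m : ℤ} (ha : a ≤ m) (hb : m ≤ b) :
    areaSeries p (LaurentPolynomial.C u * T m) ∈ slopeSubring a b := by
  intro n d h
  rw [coeff_areaSeries, ← single_eq_C_mul_T, AddMonoidAlgebra.coeff_single, Finsupp.single_apply] at h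
  split_ifs at h with hd
  · rw [← hd, mul_comm (n : ℤ)]
    exact ⟨by gcongr, by gcongr⟩
  · exact absurd rfl h

theorem X_mul_T_mem_slopeSubring {a b : ℤ} (u : K) {m : ℤ} (ha : a ≤ m) (hb : m ≤ b) :
    PowerSeries.X * PowerSeries.C (LaurentPolynomial.C u * T m) ∈ slopeSubring (K := K) a b := by
  intro n d h
  cases n with
  | zero => simp at h
  | succ n =>
    rw [coeff_succ_X_mul, coeff_C] at h
    split_ifs at h with h0
    · rw [← single_eq_C_mul_T, AddMonoidAlgebra.coeff_single, Finsupp.single_apply] at h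
      split_ifs at h with hd
      · simp [h0, ← hd, ha, hb]
      · exact absurd rfl h
    · simp at h

theorem rescale_C_map_dilate (u : K) (v : Kˣ) (x : (K[T;T⁻¹])⟦X⟧) :
    PowerSeries.rescale (LaurentPolynomial.C u) (PowerSeries.map (dilate v) x) =
      PowerSeries.map (dilate v) (PowerSeries.rescale (LaurentPolynomial.C u) x) := by
  ext1 n
  rw [coeff_rescale, coeff_map, coeff_map, coeff_rescale, map_mul, map_pow, dilate_C]

theorem PowerSeries.rescale_C {L : Type*} [CommRing L] (u w : L) :
    PowerSeries.rescale u (PowerSeries.C w) = PowerSeries.C w := by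
  ext1 n
  cases n <;> simp [coeff_rescale, coeff_C]

theorem map_dilate_areaSeries_self (p : Kˣ) (q : K) :
    PowerSeries.map (dilate p) (areaSeries (p : K) (LaurentPolynomial.C q * T 1)) =
      areaSeries (p : K) (LaurentPolynomial.C (p : K) * (LaurentPolynomial.C q * T 1)) := by
  rw [map_dilate_areaSeries, map_mul, dilate_C, dilate_T, zpow_one, mul_left_comm]

theorem map_dilate_inv_areaSeries (p : Kˣ) :
    PowerSeries.map (dilate p⁻¹) (areaSeries (p : K) (T (-1))) =
      areaSeries (p : K) (LaurentPolynomial.C (p : K) * T (-1)) := by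
  rw [map_dilate_areaSeries, dilate_T, inv_zpow', neg_neg, zpow_one]

/-- A power series with scalar coefficients, viewed over Laurent polynomials. -/
noncomputable def scalarSeries (c : ℕ → K) : (K[T;T⁻¹])⟦X⟧ :=
  PowerSeries.mk fun n => LaurentPolynomial.C (c n)

theorem map_dilate_scalarSeries (u : Kˣ) (c : ℕ → K) :
    PowerSeries.map (dilate u) (scalarSeries c) = scalarSeries c := by
  ext1 n
  rw [coeff_map, scalarSeries, coeff_mk, dilate_C]

theorem one_add_X_mul_scalarSeries {c : ℕ → K} (hc0 : c 0 = 1) :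
    1 + X * scalarSeries (fun n => c (n + 1)) = scalarSeries c := by
  ext1 n
  cases n <;> simp [scalarSeries, hc0, coeff_one]

theorem scalarSeries_mem_slopeSubring {a b : ℤ} (ha : a ≤ 0) (hb : 0 ≤ b) (c : ℕ → K) :
    scalarSeries c ∈ slopeSubring (K := K) a b := by
  intro n d h
  rw [scalarSeries, coeff_mk, LaurentPolynomial.C_apply] at h
  split_ifs at h with h0
  · rw [h0]; constructor <;> nlinarith
  · exact absurd rfl h

theorem scalarSeries_catalan_eq {q p : K} {c : ℕ → K} (hc0 : c 0 = 1) (hc1 : c 1 = 1)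
    (hc : ∀ n, c (n + 2) = c (n + 1) +
      q * ∑ x ∈ antidiagonal n, p ^ x.1 * c x.1 * c (x.2 + 1)) :
    scalarSeries (fun n => c (n + 1)) = scalarSeries c +
      X * (PowerSeries.C (LaurentPolynomial.C q) *
        (PowerSeries.rescale (LaurentPolynomial.C p) (scalarSeries c) *
          scalarSeries fun n => c (n + 1))) := by
  ext1 n
  cases n with
  | zero => simp [scalarSeries, hc0, hc1]
  | succ n =>
    rw [map_add, coeff_succ_X_mul, PowerSeries.coeff_C_mul, coeff_mul, scalarSeries, scalarSeries,
      coeff_mk, coeff_mk, hc, map_add, map_mul, map_sum]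
    congr 2
    refine Finset.sum_congr rfl fun x _ => ?_
    rw [coeff_rescale, coeff_mk, coeff_mk, map_mul, map_mul, map_pow]

/-- The generating function of `c` extends to a pair of two-variable series, supported above and
below the diagonal, satisfying a linear functional equation. -/
theorem exists_linear_functional_equation {q : K} {p : Kˣ} {c : ℕ → K} (hc0 : c 0 = 1)
    (hc1 : c 1 = 1) (hc : ∀ n, c (n + 2) = c (n + 1) +
      q * ∑ x ∈ antidiagonal n, (p : K) ^ x.1 * c x.1 * c (x.2 + 1)) :
    ∃ f₁ ∈ slopeSubring (K := K) 0 1, ∃ g₁ ∈ slopeSubring (K := K) (-1) 0,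
      ∃ f g : (K[T;T⁻¹])⟦X⟧, f = X * PowerSeries.C (T 1) * f₁ ∧
        g = scalarSeries c + X * PowerSeries.C (T (-1)) * g₁ ∧
        f + g = X * PowerSeries.C (LaurentPolynomial.C q * T 1) *
            areaSeries (p : K) (LaurentPolynomial.C (p : K) * (LaurentPolynomial.C q * T 1)) *
              (f + g) +
          areaSeries (p : K) (T (-1)) *
            (1 + X * (PowerSeries.C (LaurentPolynomial.C q) *
              PowerSeries.C (LaurentPolynomial.C ((p⁻¹ : Kˣ) : K)) *
                PowerSeries.map (dilate p) f + PowerSeries.map (dilate p⁻¹) g)) := by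
  obtain ⟨ρ, hρ⟩ : ∃ ρ : (K[T;T⁻¹])⟦X⟧ →+* (K[T;T⁻¹])⟦X⟧,
    ρ = PowerSeries.rescale (LaurentPolynomial.C (p : K)) := ⟨_, rfl⟩
  obtain ⟨σ, hσ⟩ : ∃ σ : (K[T;T⁻¹])⟦X⟧ →+* (K[T;T⁻¹])⟦X⟧, σ = PowerSeries.map (dilate p) :=
    ⟨_, rfl⟩
  obtain ⟨τ, hτ⟩ : ∃ τ : (K[T;T⁻¹])⟦X⟧ →+* (K[T;T⁻¹])⟦X⟧, τ = PowerSeries.map (dilate p⁻¹) :=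
    ⟨_, rfl⟩
  obtain ⟨κ, hκ⟩ : ∃ κ : K →+* (K[T;T⁻¹])⟦X⟧, κ = PowerSeries.C.comp LaurentPolynomial.C :=
    ⟨_, rfl⟩
  have hκ' : ∀ a, PowerSeries.C (LaurentPolynomial.C a) = κ a := fun a => by
    rw [hκ, RingHom.comp_apply]
  obtain ⟨s, hs⟩ : ∃ s : (K[T;T⁻¹])⟦X⟧, s = PowerSeries.C (T 1) := ⟨_, rfl⟩
  obtain ⟨y, hy⟩ : ∃ y : (K[T;T⁻¹])⟦X⟧, y = PowerSeries.C (T (-1)) := ⟨_, rfl⟩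
  obtain ⟨A, hA⟩ : ∃ A, A = areaSeries (p : K) (LaurentPolynomial.C q * T 1) := ⟨_, rfl⟩
  obtain ⟨B, hB⟩ : ∃ B, B = areaSeries (p : K) (T (-1)) := ⟨_, rfl⟩
  obtain ⟨G₁, hG₁⟩ : ∃ G₁, G₁ = scalarSeries fun n => c (n + 1) := ⟨_, rfl⟩
  have hσA : σ A = areaSeries (p : K)
      (LaurentPolynomial.C (p : K) * (LaurentPolynomial.C q * T 1)) := by
    rw [hσ, hA, map_dilate_areaSeries_self]
  have hτB : τ B = areaSeries (p : K) (LaurentPolynomial.C (p : K) * T (-1)) := by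
    rw [hτ, hB, map_dilate_inv_areaSeries]
  have ht : PowerSeries.C (LaurentPolynomial.C q * T 1) = κ q * s := by
    rw [hs, ← hκ', map_mul]
  have hρA : ρ A = σ A := by rw [hσA, hρ, hA, rescale_areaSeries]
  have hρB : ρ B = τ B := by rw [hτB, hρ, hB, rescale_areaSeries]
  have hAeq : A = 1 + X * (κ q * s) * σ A * A := by
    rw [hσA, ← ht, hA]; exact areaSeries_eq _ _
  have hBeq : B = 1 + X * y * τ B * B := by
    rw [hτB, hy, hB]; exact areaSeries_eq _ _
  have hκρ : ∀ a, ρ (κ a) = κ a := fun a => by rw [← hκ', hρ, PowerSeries.rescale_C]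
  have hκσ : ∀ a, σ (κ a) = κ a := fun a => by rw [← hκ', hσ, map_C, dilate_C]
  have hκτ : ∀ a, τ (κ a) = κ a := fun a => by rw [← hκ', hτ, map_C, dilate_C]
  have hρσ : ∀ x, ρ (σ x) = σ (ρ x) := fun x => by rw [hρ, hσ, rescale_C_map_dilate]
  have hρτ : ∀ x, ρ (τ x) = τ (ρ x) := fun x => by rw [hρ, hτ, rescale_C_map_dilate]
  have hXρ : ρ X = κ p * X := by rw [hρ, rescale_X, hκ']
  have hXσ : σ X = X := by rw [hσ, PowerSeries.map_X]
  have hXτ : τ X = X := by rw [hτ, PowerSeries.map_X]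
  have hρX : X ∣ ρ X := hXρ ▸ dvd_mul_left _ _
  have hσρX : X ∣ σ (ρ X) := by rw [hXρ, map_mul, hXσ]; exact dvd_mul_left _ _
  have hτρX : X ∣ τ (ρ X) := by rw [hXρ, map_mul, hXτ]; exact dvd_mul_left _ _
  have hsρ : ρ s = s := by rw [hρ, hs, PowerSeries.rescale_C]
  have hyρ : ρ y = y := by rw [hρ, hy, PowerSeries.rescale_C]
  have hsσ : σ s = κ p * s := by
    rw [hσ, hs, map_C, dilate_T, zpow_one, map_mul, hκ']
  have hyτ : τ y = κ p * y := by
    rw [hτ, hy, map_C, dilate_T, inv_zpow', neg_neg, zpow_one, map_mul, hκ']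
  have hys : y * (κ q * s) = κ q := by
    rw [mul_left_comm, hy, hs, ← map_mul, ← T_add, neg_add_cancel, T_zero, map_one, mul_one]
  have hpr : κ p * κ ((p⁻¹ : Kˣ) : K) = 1 := by rw [← map_mul, Units.mul_inv, map_one]
  have hGc : 1 + X * G₁ = scalarSeries c := by rw [hG₁, one_add_X_mul_scalarSeries hc0]
  have hσG : σ (X * G₁) = X * G₁ := by rw [map_mul, hXσ, hσ, hG₁, map_dilate_scalarSeries]
  have hτG : τ (X * G₁) = X * G₁ := by rw [map_mul, hXτ, hτ, hG₁, map_dilate_scalarSeries]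
  have hGeq : X * G₁ = X * (1 + X * G₁) + X * κ q * (X * G₁) * (1 + ρ (X * G₁)) := by
    have h := scalarSeries_catalan_eq hc0 hc1 hc
    rw [← hG₁, ← hGc, ← hρ, hκ', map_add, map_one] at h
    linear_combination X * h
  have hX01 : (X : (K[T;T⁻¹])⟦X⟧) ∈ slopeSubring (K := K) 0 1 := X_mem_slopeSubring (by simp) (by simp)
  have hX10 : (X : (K[T;T⁻¹])⟦X⟧) ∈ slopeSubring (K := K) (-1) 0 :=
    X_mem_slopeSubring (by simp) (by simp)
  have hκm : ∀ (a b : ℤ) (x : K), κ x ∈ slopeSubring (K := K) a b := fun a b x =>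
    hκ' x ▸ C_C_mem_slopeSubring a b x
  have hσm : ∀ {a b : ℤ} {x}, x ∈ slopeSubring (K := K) a b → σ (ρ x) ∈ slopeSubring (K := K) a b :=
    fun h => hσ ▸ hρ ▸ map_mem_slopeSubring p (rescale_mem_slopeSubring (p : K) h)
  have hτm : ∀ {a b : ℤ} {x}, x ∈ slopeSubring (K := K) a b → τ (ρ x) ∈ slopeSubring (K := K) a b :=
    fun h => hτ ▸ hρ ▸ map_mem_slopeSubring p⁻¹ (rescale_mem_slopeSubring (p : K) h)
  have hXs : X * s ∈ slopeSubring (K := K) 0 1 := by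
    simpa [hs] using X_mul_T_mem_slopeSubring (a := 0) (b := 1) (1 : K) (m := 1) (by simp) le_rfl
  have hXy : X * y ∈ slopeSubring (K := K) (-1) 0 := by
    simpa [hy] using X_mul_T_mem_slopeSubring (a := -1) (b := 0) (1 : K) (m := -1) le_rfl (by simp)
  have hAm : A ∈ slopeSubring (K := K) 0 1 :=
    hA ▸ areaSeries_mem_slopeSubring (p : K) q (by simp) le_rfl
  have hσAm : σ A ∈ slopeSubring (K := K) 0 1 := by
    rw [hσ]; exact map_mem_slopeSubring p hAm
  have hBm : B ∈ slopeSubring (K := K) (-1) 0 := by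
    simpa [hB] using areaSeries_mem_slopeSubring (a := -1) (b := 0) (p : K) (1 : K) (m := -1)
      le_rfl (by simp)
  have hτBm : τ B ∈ slopeSubring (K := K) (-1) 0 := by
    rw [hτ]; exact map_mem_slopeSubring p⁻¹ hBm
  have hG01 : G₁ ∈ slopeSubring (K := K) 0 1 :=
    hG₁ ▸ scalarSeries_mem_slopeSubring le_rfl (by simp) _
  have hG10 : G₁ ∈ slopeSubring (K := K) (-1) 0 :=
    hG₁ ▸ scalarSeries_mem_slopeSubring (by simp) le_rfl _
  have hem : κ q * G₁ * σ A * A ∈ slopeSubring (K := K) 0 1 :=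
    mul_mem (mul_mem (mul_mem (hκm 0 1 q) hG01) hσAm) hAm
  obtain ⟨f, hfm, hf⟩ := PowerSeries.exists_eq_add_X_mul_map (θ := σ.comp ρ) hσρX
    (X * s * (κ q * G₁ * σ A * A)) (X * s * (κ q * G₁ * σ A * A * κ q))
    (S := slopeSubring (K := K) 0 1) (zero_mem _)
    (fun x hx => add_mem (mul_mem hXs hem)
      (mul_mem (mul_mem hX01 (mul_mem hXs (mul_mem hem (hκm 0 1 q)))) (hσm hx)))
    (fun _ => mem_slopeSubring_of_forall_coeff)
  obtain ⟨g, hgm, hg⟩ := PowerSeries.exists_eq_add_X_mul_map (θ := τ.comp ρ) hτρX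
    (B * (1 + X * G₁)) (X * y * (B * G₁ * κ p * τ B))
    (S := slopeSubring (K := K) (-1) 0) (zero_mem _)
    (fun x hx => add_mem (mul_mem hBm (add_mem (one_mem _) (mul_mem hX10 hG10)))
      (mul_mem (mul_mem hX10 (mul_mem hXy
        (mul_mem (mul_mem (mul_mem hBm hG10) (hκm _ _ p)) hτBm))) (hτm hx)))
    (fun _ => mem_slopeSubring_of_forall_coeff)
  rw [RingHom.comp_apply] at hf hg
  refine ⟨κ q * G₁ * σ A * A * (1 + X * κ q * σ (ρ f)),
    mul_mem hem (add_mem (one_mem _)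
      (mul_mem (mul_mem hX01 (hκm 0 1 q)) (hσm hfm))),
    τ B * B * (1 + X * G₁) + B * (X * G₁) * κ p * τ B * τ (ρ g),
    add_mem (mul_mem (mul_mem hτBm hBm) (add_mem (one_mem _) (mul_mem hX10 hG10)))
      (mul_mem (mul_mem (mul_mem (mul_mem hBm (mul_mem hX10 hG10)) (hκm _ _ p)) hτBm) (hτm hgm)), f, g, ?_, ?_, ?_⟩
  · rw [← hs]
    linear_combination hf
  · rw [← hy, ← hGc]
    linear_combination hg + (1 + X * G₁) * hBeq
  · rw [ht, ← hσA, ← hB, ← hσ, ← hτ, hκ', hκ']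
    refine linear_equation_of_rescaled_equations ρ σ τ hρσ hρτ (G := X * G₁) hpr hys hXρ hXσ hXτ
      (hκρ q) (hκσ q) (hκτ q) (hκρ p) (hκσ p) (hκτ p) (hκρ _) (hκσ _) ?_ ?_ hyρ hyτ hρA hρB hσG hτG
      hAeq hBeq hGeq (fun e h => eq_zero_of_eq_X_mul_map (θ := σ.comp ρ) hσρX)
      (fun e h => eq_zero_of_eq_X_mul_map (θ := τ.comp ρ) hτρX)
      (fun e h => eq_zero_of_eq_X_mul_map hρX) ?_ ?_
    · rw [map_mul, hκρ, hsρ]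
    · rw [map_mul, hκσ, hsσ, mul_left_comm]
    · linear_combination hf
    · linear_combination hg

/-- The weight contributed by the maximal entry of a 132-avoiding permutation together with its
crossings, when `d` measures how far the entries to its left are shifted above the diagonal. -/
def peakWeight (q p : K) (d : ℤ) : K :=
  if 0 < d then q * p ^ (d - 1).toNat else p ^ (-d).toNat

theorem coeff_X_mul_C_T_mul_zero (m : ℤ) (h : (K[T;T⁻¹])⟦X⟧) (d : ℤ) :
    (coeff 0 (X * PowerSeries.C (T m) * h)).coeff d = 0 := by
  rw [mul_assoc, coeff_zero_X_mul, AddMonoidAlgebra.coeff_zero, Finsupp.zero_apply]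

theorem coeff_X_mul_C_T_mul_succ (m : ℤ) (h : (K[T;T⁻¹])⟦X⟧) (n : ℕ) (d : ℤ) :
    (coeff (n + 1) (X * PowerSeries.C (T m) * h)).coeff d = (coeff n h).coeff (d - m) := by
  rw [mul_assoc, coeff_succ_X_mul, PowerSeries.coeff_C_mul, LaurentPolynomial.coeff_T_mul]

/-- A solution of the linear recursion obeyed by the shifted generating functions of
132-avoiding permutations, whose restriction to shift `0` is `c`. -/
theorem exists_solution_linear_recursion {q : K} {p : Kˣ} {c : ℕ → K} (hc0 : c 0 = 1)
    (hc1 : c 1 = 1) (hc : ∀ n, c (n + 2) = c (n + 1) +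
      q * ∑ x ∈ antidiagonal n, (p : K) ^ x.1 * c x.1 * c (x.2 + 1)) :
    ∃ φ : ℕ → ℤ → K, (∀ (n : ℕ) (d : ℤ), φ n d ≠ 0 → -n ≤ d ∧ d ≤ n) ∧ (∀ n, φ n 0 = c n) ∧
      ∀ (n : ℕ) (d : ℤ), φ (n + 1) d =
        ∑ x ∈ antidiagonal n, q ^ (x.1 + 1) * (p : K) ^ x.1 * areaCatalan (p : K) x.1 *
          φ x.2 (d - x.1 - 1) +
        ∑ x ∈ antidiagonal n, areaCatalan (p : K) x.2 *
          (peakWeight q p (d + x.2) * φ x.1 (d + x.2)) +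
        if d = -(n + 1 : ℤ) then areaCatalan (p : K) (n + 1) else 0 := by
  obtain ⟨f₁, hf₁, g₁, hg₁, f, g, hf, hg, hfg⟩ := exists_linear_functional_equation hc0 hc1 hc
  have hfs : ∀ (n : ℕ) (d : ℤ), (coeff n f).coeff d ≠ 0 → 1 ≤ d ∧ d ≤ n := by
    intro n d h
    rw [hf] at h
    cases n with
    | zero => exact absurd (coeff_X_mul_C_T_mul_zero _ _ _) h
    | succ n =>
      rw [coeff_X_mul_C_T_mul_succ] at h
      have := hf₁ _ _ h
      push_cast
      omega
  have hgs : ∀ (n : ℕ) (d : ℤ), (coeff n g).coeff d ≠ 0 → -n ≤ d ∧ d ≤ 0 := by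
    intro n d h
    rw [hg, map_add, AddMonoidAlgebra.coeff_add, Finsupp.add_apply, scalarSeries, coeff_mk,
      LaurentPolynomial.C_apply] at h
    cases n with
    | zero =>
      rw [coeff_X_mul_C_T_mul_zero] at h
      split_ifs at h with h0
      · omega
      · simp at h
    | succ n =>
      rw [coeff_X_mul_C_T_mul_succ] at h
      split_ifs at h with h0
      · omega
      · rw [zero_add] at h
        have := hg₁ _ _ h
        push_cast
        omega
  have hg0 : ∀ n : ℕ, (coeff n g).coeff 0 = c n := by
    intro n
    rw [hg, map_add, AddMonoidAlgebra.coeff_add, Finsupp.add_apply, scalarSeries, coeff_mk,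
      LaurentPolynomial.C_apply, if_pos rfl, add_eq_left]
    cases n with
    | zero => exact coeff_X_mul_C_T_mul_zero _ _ _
    | succ n =>
      rw [coeff_X_mul_C_T_mul_succ]
      by_contra h
      have := hg₁ _ _ h
      omega
  refine ⟨fun n d => (coeff n (f + g)).coeff d, fun n d h => ?_, fun n => ?_, fun n d => ?_⟩
  · simp only [map_add, AddMonoidAlgebra.coeff_add, Finsupp.add_apply] at h
    by_cases h0 : (coeff n f).coeff d = 0
    · rw [h0, zero_add] at h
      have := hgs n d h
      omega
    · have := hfs n d h0
      omega
  · simp only [map_add, AddMonoidAlgebra.coeff_add, Finsupp.add_apply, hg0]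
    rw [add_eq_right]
    by_contra h
    have := hfs n 0 h
    omega
  have hW : ∀ (k : ℕ) (e : ℤ), (coeff k (PowerSeries.C (LaurentPolynomial.C q) *
      PowerSeries.C (LaurentPolynomial.C ((p⁻¹ : Kˣ) : K)) * PowerSeries.map (dilate p) f +
        PowerSeries.map (dilate p⁻¹) g)).coeff e =
      peakWeight q p e * (coeff k (f + g)).coeff e := by
    intro k e
    rw [map_add, map_add, AddMonoidAlgebra.coeff_add, AddMonoidAlgebra.coeff_add, Finsupp.add_apply,
      Finsupp.add_apply, ← map_mul, ← map_mul, PowerSeries.coeff_C_mul,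
      LaurentPolynomial.coeff_C_mul, coeff_map, coeff_map, coeff_dilate, coeff_dilate]
    by_cases he : 0 < e
    · have h0 : (coeff k g).coeff e = 0 := by
        by_contra h; have := hgs k e h; omega
      obtain ⟨m, rfl⟩ : ∃ m : ℕ, e = m + 1 := ⟨(e - 1).toNat, by omega⟩
      rw [h0, peakWeight, if_pos he, add_sub_cancel_right, Int.toNat_natCast, zpow_add_one,
        zpow_natCast, Units.val_mul, Units.val_pow_eq_pow_val]
      linear_combination q * (p : K) ^ m * (coeff k f).coeff (m + 1 : ℤ) * p.inv_mul
    · have h0 : (coeff k f).coeff e = 0 := by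
        by_contra h; have := hfs k e h; omega
      obtain ⟨m, rfl⟩ : ∃ m : ℕ, e = -m := ⟨(-e).toNat, by omega⟩
      rw [h0, peakWeight, if_neg he, neg_neg, Int.toNat_natCast, inv_zpow', neg_neg, zpow_natCast,
        Units.val_pow_eq_pow_val]
      ring
  beta_reduce
  conv_lhs => rw [hfg]
  rw [mul_add (areaSeries _ _), mul_one, mul_left_comm (areaSeries _ _) X, ← add_assoc, map_add, map_add,
    AddMonoidAlgebra.coeff_add, AddMonoidAlgebra.coeff_add, Finsupp.add_apply, Finsupp.add_apply,
    add_right_comm]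
  congr 1
  · congr 1
    · rw [mul_assoc, mul_assoc, coeff_succ_X_mul, PowerSeries.coeff_C_mul, coeff_mul,
        Finset.mul_sum, AddMonoidAlgebra.coeff_sum, Finsupp.finsetSum_apply]
      refine Finset.sum_congr rfl fun x _ => ?_
      rw [← mul_assoc (LaurentPolynomial.C (p : K)), ← map_mul, coeff_areaSeries, ← mul_assoc,
        mul_mul_mul_comm, ← map_mul, ← T_add, LaurentPolynomial.coeff_C_mul_T_mul]
      congr 1
      · ring
      · congr 1; ring
    · rw [coeff_succ_X_mul, coeff_mul, ← Finset.Nat.sum_antidiagonal_swap,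
        AddMonoidAlgebra.coeff_sum, Finsupp.finsetSum_apply]
      refine Finset.sum_congr rfl fun x _ => ?_
      rw [areaSeries, coeff_mk, T_pow, LaurentPolynomial.coeff_C_mul_T_mul, hW]
      simp
  · rw [areaSeries, coeff_mk, T_pow, ← single_eq_C_mul_T, AddMonoidAlgebra.coeff_single,
      Finsupp.single_apply]
    refine if_congr ?_ rfl rfl
    push_cast
    constructor <;> intro h <;> linarith

/-- The decomposition of a 132-avoiding permutation at its maximal entry, expressed as a recursion
for a family `F n d` of generating functions, where `d` is a vertical shift. -/
structure IsPeakRecursive (q p : K) (F : ℕ → ℤ → K) : Prop where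
  zero : ∀ d, F 0 d = 1
  succ : ∀ (n : ℕ) (d : ℤ), F (n + 1) d = ∑ x ∈ antidiagonal n,
    (if 0 < d + x.2 then q else 1) *
      p ^ (min x.1 (d + x.2 - 1).toNat + min x.1 (-(d + x.2)).toNat) *
      (F x.1 (d + x.2) * F x.2 (d - x.1 - 1))

theorem IsPeakRecursive.eq_of_le {q p : K} {F : ℕ → ℤ → K} (hF : IsPeakRecursive q p F) (n : ℕ) :
    ∀ d : ℤ, n ≤ d → F n d = q ^ n * areaCatalan p n := by
  induction n using Nat.strong_induction_on with
  | _ n ih =>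
  intro d hd
  cases n with
  | zero => simp [hF.zero, areaCatalan_zero]
  | succ n =>
    rw [hF.succ, areaCatalan_succ, Finset.mul_sum]
    refine Finset.sum_congr rfl fun x hx => ?_
    have hx := Finset.HasAntidiagonal.mem_antidiagonal.mp hx
    push_cast at hd
    rw [if_pos (by omega), ih x.1 (by omega) _ (by omega), ih x.2 (by omega) _ (by omega),
      show min x.1 (d + x.2 - 1).toNat + min x.1 (-(d + x.2)).toNat = x.1 by omega, ← hx]
    ring

theorem IsPeakRecursive.eq_of_le_neg {q p : K} {F : ℕ → ℤ → K} (hF : IsPeakRecursive q p F)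
    (n : ℕ) : ∀ d : ℤ, d ≤ -n → F n d = areaCatalan p n := by
  induction n using Nat.strong_induction_on with
  | _ n ih =>
  intro d hd
  cases n with
  | zero => simp [hF.zero, areaCatalan_zero]
  | succ n =>
    rw [hF.succ, areaCatalan_succ]
    refine Finset.sum_congr rfl fun x hx => ?_
    have hx := Finset.HasAntidiagonal.mem_antidiagonal.mp hx
    push_cast at hd
    rw [if_neg (by omega), ih x.1 (by omega) _ (by omega), ih x.2 (by omega) _ (by omega),
      show min x.1 (d + x.2 - 1).toNat + min x.1 (-(d + x.2)).toNat = x.1 by omega]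
    ring

theorem IsPeakRecursive.apply_zero {q : K} {p : Kˣ} {F : ℕ → ℤ → K}
    (hF : IsPeakRecursive q (p : K) F) {c : ℕ → K} (hc0 : c 0 = 1)
    (hc1 : c 1 = 1) (hc : ∀ n, c (n + 2) = c (n + 1) +
      q * ∑ x ∈ antidiagonal n, (p : K) ^ x.1 * c x.1 * c (x.2 + 1)) (n : ℕ) :
    F n 0 = c n := by
  obtain ⟨φ, hφs, hφ0, hφ⟩ := exists_solution_linear_recursion hc0 hc1 hc
  have hφz : ∀ (n : ℕ) (d : ℤ), (d < -n ∨ n < d) → φ n d = 0 := fun n d h => by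
    by_contra h0
    have := hφs n d h0
    omega
  rw [← hφ0]
  suffices h : ∀ n : ℕ, ∀ d : ℤ, -n ≤ d → d ≤ n → F n d = φ n d from h n 0 (by simp) (by simp)
  intro n
  induction n using Nat.strong_induction_on with
  | _ n ih =>
  intro d hd₁ hd₂
  cases n with
  | zero =>
    obtain rfl : d = 0 := by omega
    rw [hF.zero, hφ0, hc0]
  | succ n =>
    push_cast at hd₁ hd₂
    rw [hφ]
    rcases eq_or_lt_of_le hd₁ with rfl | hd₁
    · rw [hF.eq_of_le_neg _ _ (by push_cast; omega), Finset.sum_eq_zero, Finset.sum_eq_zero, if_pos rfl,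
        zero_add, zero_add]
      · intro x hx
        have hx := Finset.HasAntidiagonal.mem_antidiagonal.mp hx
        rw [hφz x.1 _ (by omega), mul_zero, mul_zero]
      · intro x hx
        have hx := Finset.HasAntidiagonal.mem_antidiagonal.mp hx
        rw [hφz x.2 _ (by omega), mul_zero]
    · rw [if_neg hd₁.ne', add_zero, hF.succ, ← Finset.sum_add_distrib]
      refine Finset.sum_congr rfl fun x hx => ?_
      have hx := Finset.HasAntidiagonal.mem_antidiagonal.mp hx
      by_cases hk : d + x.2 ≤ x.1
      · rw [hφz x.2 _ (by omega), hF.eq_of_le_neg x.2 _ (by omega),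
          ih x.1 (by omega) _ (by omega) (by omega), peakWeight]
        split_ifs with h0
        · rw [show min x.1 (d + x.2 - 1).toNat + min x.1 (-(d + x.2)).toNat =
            (d + x.2 - 1).toNat by omega]
          ring
        · rw [show min x.1 (d + x.2 - 1).toNat + min x.1 (-(d + x.2)).toNat =
            (-(d + x.2)).toNat by omega]
          ring
      · rw [hφz x.1 _ (by omega), hF.eq_of_le x.1 _ (by omega),
          ih x.2 (by omega) _ (by omega) (by omega), if_pos (by omega),
          show min x.1 (d + x.2 - 1).toNat + min x.1 (-(d + x.2)).toNat = x.1 by omega]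
        ring

end Laurent

section PointStatistics

variable {ι κ : Type*} [Fintype ι] [Fintype κ]

/-- The number of points `(x i, y i)` strictly above the diagonal. -/
def excPoints (x y : ι → ℤ) : ℕ := ∑ i, if x i < y i then 1 else 0

/-- Whether the points `(x₁, y₁)` and `(x₂, y₂)`, in this order, form a crossing. -/
abbrev IsCrossing (x₁ y₁ x₂ y₂ : ℤ) : Prop :=
  (x₁ < x₂ ∧ x₂ < y₁ ∧ y₁ < y₂) ∨ (y₁ < y₂ ∧ y₂ ≤ x₁ ∧ x₁ < x₂)

/-- The number of crossings of the point configuration `(x i, y i)`. -/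
def crsPoints (x y : ι → ℤ) : ℕ := ∑ i, ∑ j, if IsCrossing (x i) (y i) (x j) (y j) then 1 else 0

theorem excPoints_comp_equiv (e : κ ≃ ι) (x y : ι → ℤ) :
    excPoints (x ∘ e) (y ∘ e) = excPoints x y :=
  e.sum_comp fun i => if x i < y i then 1 else 0

theorem crsPoints_comp_equiv (e : κ ≃ ι) (x y : ι → ℤ) :
    crsPoints (x ∘ e) (y ∘ e) = crsPoints x y := by
  unfold crsPoints
  rw [← e.sum_comp]
  exact Finset.sum_congr rfl fun i _ =>
    e.sum_comp fun j => if IsCrossing (x (e i)) (y (e i)) (x j) (y j) then 1 else 0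

theorem excPoints_eq_of_sub_eq {x y x' y' : ι → ℤ} (c : ℤ) (hx : ∀ i, x' i = x i + c)
    (hy : ∀ i, y' i = y i + c) : excPoints x' y' = excPoints x y := by
  simp only [excPoints, hx, hy, add_lt_add_iff_right]

theorem crsPoints_eq_of_sub_eq {x y x' y' : ι → ℤ} (c : ℤ) (hx : ∀ i, x' i = x i + c)
    (hy : ∀ i, y' i = y i + c) : crsPoints x' y' = crsPoints x y := by
  simp only [crsPoints, IsCrossing, hx, hy, add_lt_add_iff_right, add_le_add_iff_right]

theorem excPoints_sum (x y : ι ⊕ (Unit ⊕ κ) → ℤ) :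
    excPoints x y = excPoints (x ∘ Sum.inl) (y ∘ Sum.inl) +
      (if x (.inr (.inl ())) < y (.inr (.inl ())) then 1 else 0) +
      excPoints (x ∘ Sum.inr ∘ Sum.inr) (y ∘ Sum.inr ∘ Sum.inr) := by
  simp only [excPoints, Fintype.sum_sum_type, Finset.univ_unique, Finset.sum_singleton,
    PUnit.default_eq_unit, Function.comp_apply, add_assoc]

/-- The crossings of a configuration consisting of a left block, a central point and a right
block, where the right block lies below everything else. -/
theorem crsPoints_sum (x y : ι ⊕ (Unit ⊕ κ) → ℤ)
    (hx₁ : ∀ i, x (.inl i) < x (.inr (.inl ())))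
    (hx₂ : ∀ j, x (.inr (.inl ())) < x (.inr (.inr j)))
    (hy₁ : ∀ i, y (.inl i) < y (.inr (.inl ())))
    (hy₂ : ∀ j, y (.inr (.inr j)) < y (.inr (.inl ())))
    (hy₃ : ∀ i j, y (.inr (.inr j)) < y (.inl i)) :
    crsPoints x y = crsPoints (x ∘ Sum.inl) (y ∘ Sum.inl) +
      ∑ i, (if x (.inr (.inl ())) < y (.inl i) ∨ y (.inr (.inl ())) ≤ x (.inl i) then 1 else 0) +
      crsPoints (x ∘ Sum.inr ∘ Sum.inr) (y ∘ Sum.inr ∘ Sum.inr) := by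
  have h₁ : ∀ i, IsCrossing (x (.inl i)) (y (.inl i)) (x (.inr (.inl ()))) (y (.inr (.inl ()))) ↔
      x (.inr (.inl ())) < y (.inl i) ∨ y (.inr (.inl ())) ≤ x (.inl i) := fun i => by
    have := hx₁ i; have := hy₁ i; unfold IsCrossing; omega
  have h₂ : ∀ i, ¬IsCrossing (x (.inr (.inl ()))) (y (.inr (.inl ()))) (x (.inl i)) (y (.inl i)) :=
    fun i => by have := hx₁ i; unfold IsCrossing; omega
  have h₃ : ∀ j, ¬IsCrossing (x (.inr (.inl ()))) (y (.inr (.inl ())))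
      (x (.inr (.inr j))) (y (.inr (.inr j))) :=
    fun j => by have := hy₂ j; unfold IsCrossing; omega
  have h₄ : ∀ j, ¬IsCrossing (x (.inr (.inr j))) (y (.inr (.inr j)))
      (x (.inr (.inl ()))) (y (.inr (.inl ()))) :=
    fun j => by have := hx₂ j; unfold IsCrossing; omega
  have h₅ : ∀ i j, ¬IsCrossing (x (.inl i)) (y (.inl i)) (x (.inr (.inr j))) (y (.inr (.inr j))) :=
    fun i j => by have := hy₃ i j; unfold IsCrossing; omega
  have h₆ : ∀ i j, ¬IsCrossing (x (.inr (.inr j))) (y (.inr (.inr j))) (x (.inl i)) (y (.inl i)) :=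
    fun i j => by have := hx₁ i; have := hx₂ j; unfold IsCrossing; omega
  have h₇ : ∀ a b, ¬IsCrossing a b a b := fun a b => by unfold IsCrossing; omega
  simp only [crsPoints, Fintype.sum_sum_type, Finset.univ_unique, Finset.sum_singleton, h₁,
    PUnit.default_eq_unit, h₂, h₃, h₄, h₅, h₆, h₇, if_false, Finset.sum_const_zero, add_zero,
    zero_add, Finset.sum_add_distrib, Function.comp_apply, add_assoc]

end PointStatistics

section Glue

/-- Positions of a left block, a central entry and a right block. -/
noncomputable def blockPosition (k m : ℕ) : Fin k ⊕ (Unit ⊕ Fin m) ≃ Fin (k + m + 1) :=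
  Equiv.ofBijective
    (Sum.elim (fun i => ⟨i, by omega⟩)
      (Sum.elim (fun _ => ⟨k, by omega⟩) fun j => ⟨k + 1 + j, by omega⟩)) <| by
    rw [Fintype.bijective_iff_injective_and_card]
    refine ⟨?_, by simp; omega⟩
    rintro (i | ⟨⟩ | i) (j | ⟨⟩ | j) h <;>
      simp only [Sum.elim_inl, Sum.elim_inr, reduceCtorEq, Sum.inl.injEq,
        Sum.inr.injEq, Fin.ext_iff] at h ⊢ <;> omega

/-- Values of a left block, a maximal central entry and a right block lying below the left one. -/
noncomputable def blockValue (k m : ℕ) : Fin k ⊕ (Unit ⊕ Fin m) ≃ Fin (k + m + 1) :=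
  Equiv.ofBijective
    (Sum.elim (fun i => ⟨m + i, by omega⟩)
      (Sum.elim (fun _ => ⟨k + m, by omega⟩) fun j => ⟨j, by omega⟩)) <| by
    rw [Fintype.bijective_iff_injective_and_card]
    refine ⟨?_, by simp; omega⟩
    rintro (i | ⟨⟩ | i) (j | ⟨⟩ | j) h <;>
      simp only [Sum.elim_inl, Sum.elim_inr, reduceCtorEq, Sum.inl.injEq,
        Sum.inr.injEq, Fin.ext_iff] at h ⊢ <;> omega

variable {k m : ℕ}

@[simp] theorem blockPosition_inl (i : Fin k) : (blockPosition k m (.inl i) : ℕ) = i := rfl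

@[simp] theorem blockPosition_inr_inl (u : Unit) :
    (blockPosition k m (.inr (.inl u)) : ℕ) = k := rfl

@[simp] theorem blockPosition_inr_inr (j : Fin m) :
    (blockPosition k m (.inr (.inr j)) : ℕ) = k + 1 + j := rfl

@[simp] theorem blockValue_inl (i : Fin k) : (blockValue k m (.inl i) : ℕ) = m + i := rfl

@[simp] theorem blockValue_inr_inl (u : Unit) :
    (blockValue k m (.inr (.inl u)) : ℕ) = k + m := rfl

@[simp] theorem blockValue_inr_inr (j : Fin m) :
    (blockValue k m (.inr (.inr j)) : ℕ) = j := rfl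

/-- The permutation whose maximal entry is preceded by a copy of `α` and followed by a copy of `β`,
with all entries of `α` above all entries of `β`. -/
noncomputable def glue (α : Perm (Fin k)) (β : Perm (Fin m)) : Perm (Fin (k + m + 1)) :=
  (blockPosition k m).symm.trans
    ((Equiv.sumCongr α (Equiv.sumCongr (Equiv.refl Unit) β)).trans (blockValue k m))

theorem glue_blockPosition (α : Perm (Fin k)) (β : Perm (Fin m)) (s : Fin k ⊕ (Unit ⊕ Fin m)) :
    glue α β (blockPosition k m s) =
      blockValue k m (Sum.map α (Sum.map id β) s) := by
  rw [glue, Equiv.trans_apply, Equiv.symm_apply_apply]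
  rfl

/-- Elementary form of the avoidance of 132. -/
def IsAv132 {n : ℕ} (σ : Perm (Fin n)) : Prop :=
  ∀ i j l, i < j → j < l → ¬(σ i < σ l ∧ σ l < σ j)

theorem isAv132_glue_iff (α : Perm (Fin k)) (β : Perm (Fin m)) :
    IsAv132 (glue α β) ↔ IsAv132 α ∧ IsAv132 β := by
  constructor
  · refine fun h => ⟨fun i j l hij hjl hσ => ?_, fun i j l hij hjl hσ => ?_⟩
    · refine h (blockPosition k m (.inl i)) (blockPosition k m (.inl j))
        (blockPosition k m (.inl l)) ?_ ?_ ?_ <;>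
      simp only [glue_blockPosition, Sum.map_inl, Fin.lt_def, blockPosition_inl,
        blockValue_inl] at * <;> omega
    · refine h (blockPosition k m (.inr (.inr i))) (blockPosition k m (.inr (.inr j)))
        (blockPosition k m (.inr (.inr l))) ?_ ?_ ?_ <;>
      simp only [glue_blockPosition, Sum.map_inr, Fin.lt_def, blockPosition_inr_inr,
        blockValue_inr_inr] at * <;> omega
  · rintro ⟨hα, hβ⟩ i j l hij hjl hσ
    obtain ⟨i, rfl⟩ := (blockPosition k m).surjective i
    obtain ⟨j, rfl⟩ := (blockPosition k m).surjective j
    obtain ⟨l, rfl⟩ := (blockPosition k m).surjective l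
    simp only [glue_blockPosition] at hσ
    rcases i with i | ⟨⟩ | i <;> rcases j with j | ⟨⟩ | j <;> rcases l with l | ⟨⟩ | l <;>
      simp only [Sum.map_inl, Sum.map_inr, Fin.lt_def, blockPosition_inl, blockPosition_inr_inl,
        blockPosition_inr_inr, blockValue_inl, blockValue_inr_inl, blockValue_inr_inr] at hij hjl hσ
    case inl.inl.inl => exact hα i j l hij hjl (by simp only [Fin.lt_def]; omega)
    case inr.inr.inr.inr.inr.inr =>
      exact hβ i j l (by simp only [Fin.lt_def]; omega) (by simp only [Fin.lt_def]; omega) hσ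
    all_goals omega

theorem glue_injective {α α' : Perm (Fin k)} {β β' : Perm (Fin m)} (h : glue α β = glue α' β') :
    α = α' ∧ β = β' := by
  have h' : ∀ s, Sum.map α (Sum.map id β) s = Sum.map α' (Sum.map id β') s := fun s => by
    rw [← (blockValue k m).apply_eq_iff_eq, ← glue_blockPosition, ← glue_blockPosition, h]
  exact ⟨Equiv.ext fun i => by simpa using h' (.inl i),
    Equiv.ext fun j => by simpa using h' (.inr (.inr j))⟩

theorem glue_apply_center (α : Perm (Fin k)) (β : Perm (Fin m)) :
    glue α β ⟨k, by omega⟩ = Fin.last (k + m) :=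
  (glue_blockPosition α β (.inr (.inl ()))).trans (Fin.ext rfl)

/-- A 132-avoiding permutation is glued from the entries before and after its maximum. -/
theorem exists_glue_eq {σ : Perm (Fin (k + m + 1))} (hσ : IsAv132 σ)
    (hk : σ ⟨k, by omega⟩ = Fin.last (k + m)) :
    ∃ (α : Perm (Fin k)) (β : Perm (Fin m)), glue α β = σ := by
  have hmax : ∀ i : Fin (k + m + 1), (i : ℕ) ≠ k → (σ i : ℕ) < k + m := fun i hi => by
    have h : σ i ≠ σ ⟨k, by omega⟩ := fun h => hi (by rw [σ.injective h])
    rw [hk, Ne, Fin.ext_iff, Fin.val_last] at h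
    omega
  have hsep : ∀ i l : Fin (k + m + 1), (i : ℕ) < k → k < (l : ℕ) → (σ l : ℕ) < σ i := by
    intro i l hi hl
    have h := hσ i ⟨k, by omega⟩ l hi hl
    rw [hk, Fin.lt_def, Fin.lt_def, Fin.val_last] at h
    have h₁ := hmax l (by omega)
    have h₂ : (σ i : ℕ) ≠ σ l := fun h => by
      have := σ.injective (Fin.ext h)
      omega
    omega
  let a : Fin k → Fin (k + m + 1) := fun i => blockPosition k m (.inl i)
  let b : Fin m → Fin (k + m + 1) := fun j => blockPosition k m (.inr (.inr j))
  have ha : Function.Injective (fun i => (σ (a i) : ℕ)) := fun i j h => by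
    simpa [a] using Fin.ext h
  have hb : Function.Injective (fun i => (σ (b i) : ℕ)) := fun i j h => by
    simpa [b] using Fin.ext h
  have hab : ∀ i j, (σ (b j) : ℕ) < σ (a i) := fun i j =>
    hsep _ _ (by simp [a]) (by simp [b]; omega)
  have ha' : ∀ i, m ≤ (σ (a i) : ℕ) := fun i => by
    have h := Fintype.card_le_of_injective (fun j : Fin m => (⟨σ (b j), hab i j⟩ : Fin (σ (a i))))
      fun j j' h => hb (by simpa using h)
    simpa using h
  have ha'' : ∀ i, (σ (a i) : ℕ) < k + m := fun i => hmax _ (by simp [a]; omega)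
  have hb' : ∀ j, (σ (b j) : ℕ) < m := fun j => by
    by_contra hj
    have h := Fintype.card_le_of_injective
      (fun i : Fin k => (⟨σ (a i) - (σ (b j) + 1), by have := ha'' i; have := hab i j; omega⟩ :
        Fin (k + m - (σ (b j) + 1))))
      fun i i' h => ha (by
        have := hab i j; have := hab i' j
        simp only [Fin.mk.injEq] at h ⊢; omega)
    have := hmax (b j) (by simp [b]; omega)
    simp only [Fintype.card_fin] at h
    omega
  let α : Fin k → Fin k := fun i => ⟨σ (a i) - m, by have := ha' i; have := ha'' i; omega⟩
  let β : Fin m → Fin m := fun j => ⟨σ (b j), hb' j⟩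
  have hα : Function.Injective α := fun i i' h => ha (by
    have := ha' i; have := ha' i'
    simp only [α, Fin.mk.injEq] at h ⊢; omega)
  have hβ : Function.Injective β := fun j j' h => hb (by simpa [β] using h)
  refine ⟨Equiv.ofBijective α (Finite.injective_iff_bijective.mp hα),
    Equiv.ofBijective β (Finite.injective_iff_bijective.mp hβ), Equiv.ext fun t => ?_⟩
  obtain ⟨s, rfl⟩ := (blockPosition k m).surjective t
  rw [glue_blockPosition]
  rcases s with i | ⟨⟩ | j
  · exact Fin.ext (Nat.add_sub_cancel' (ha' i))
  · exact Fin.ext (congrArg Fin.val hk).symm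
  · rfl

end Glue

section ShiftedStatistics

/-- The number of excedances of `σ` after shifting its values by `d`. -/
def shiftedExc {n : ℕ} (d : ℤ) (σ : Perm (Fin n)) : ℕ :=
  excPoints (fun i : Fin n => (i : ℤ)) fun i => (σ i : ℤ) + d

/-- The number of crossings of `σ` after shifting its values by `d`. -/
def shiftedCrs {n : ℕ} (d : ℤ) (σ : Perm (Fin n)) : ℕ :=
  crsPoints (fun i : Fin n => (i : ℤ)) fun i => (σ i : ℤ) + d

theorem shiftedExc_zero {n : ℕ} (σ : Perm (Fin n)) : shiftedExc 0 σ = exc σ := by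
  simp [shiftedExc, excPoints, exc]

theorem shiftedCrs_zero {n : ℕ} (σ : Perm (Fin n)) : shiftedCrs 0 σ = crs σ := by
  simp only [shiftedCrs, crsPoints, crs, Finset.card_filter, Fintype.sum_prod_type, IsCrossing,
    add_zero, Nat.cast_lt, Nat.cast_le]

theorem sum_fin_ite_le (k : ℕ) (a : ℤ) :
    (∑ i : Fin k, if a ≤ (i : ℤ) then 1 else 0) = min k (k - a).toNat := by
  induction k with
  | zero => simp
  | succ k ih =>
    simp only [Fin.sum_univ_castSucc, Fin.val_castSucc, ih, Fin.val_last]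
    split_ifs <;> omega

variable {k m : ℕ}

theorem shiftedExc_glue (d : ℤ) (α : Perm (Fin k)) (β : Perm (Fin m)) :
    shiftedExc d (glue α β) = shiftedExc (d + m) α + (if 0 < d + m then 1 else 0) +
      shiftedExc (d - k - 1) β := by
  rw [shiftedExc, ← excPoints_comp_equiv (blockPosition k m), excPoints_sum]
  congr 1
  · congr 1
    · refine excPoints_eq_of_sub_eq 0 (fun i => ?_) fun i => ?_ <;>
      simp [glue_blockPosition] <;> ring
    · refine if_congr ?_ rfl rfl
      simp only [glue_blockPosition, Function.comp_apply, Sum.map_inl, Sum.map_inr,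
        blockPosition_inr_inl, blockValue_inr_inl]
      omega
  · refine excPoints_eq_of_sub_eq (k + 1) (fun i => ?_) fun i => ?_ <;>
      simp [glue_blockPosition] <;> ring

theorem shiftedCrs_glue (d : ℤ) (α : Perm (Fin k)) (β : Perm (Fin m)) :
    shiftedCrs d (glue α β) = shiftedCrs (d + m) α +
      (min k (d + m - 1).toNat + min k (-(d + m)).toNat) + shiftedCrs (d - k - 1) β := by
  rw [shiftedCrs, ← crsPoints_comp_equiv (blockPosition k m), crsPoints_sum]
  · congr 1
    · congr 1
      · refine crsPoints_eq_of_sub_eq 0 (fun i => ?_) fun i => ?_ <;>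
        simp [glue_blockPosition] <;> ring
      · simp only [glue_blockPosition, Function.comp_apply, Sum.map_inl, Sum.map_inr,
          blockPosition_inl, blockPosition_inr_inl, blockValue_inl, blockValue_inr_inl]
        rcases lt_or_ge 0 (d + m) with h | h
        · have h' : ∀ i : Fin k, ((k : ℤ) < ((m + α i : ℕ) : ℤ) + d ∨ ((k + m : ℕ) : ℤ) + d ≤ i) ↔
              (k : ℤ) - m - d + 1 ≤ (α i : ℤ) := fun i => by omega
          simp only [h']
          rw [Equiv.sum_comp α fun i : Fin k => if (k : ℤ) - m - d + 1 ≤ (i : ℤ) then 1 else 0, sum_fin_ite_le]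
          omega
        · have h' : ∀ i : Fin k, ((k : ℤ) < ((m + α i : ℕ) : ℤ) + d ∨ ((k + m : ℕ) : ℤ) + d ≤ i) ↔
              (k : ℤ) + m + d ≤ (i : ℤ) := fun i => by omega
          simp only [h', sum_fin_ite_le]
          omega
    · refine crsPoints_eq_of_sub_eq (k + 1) (fun i => ?_) fun i => ?_ <;>
      simp [glue_blockPosition] <;> ring
  all_goals
    intros
    simp [glue_blockPosition]
    try omega

open scoped Classical in
/-- The generating function of 132-avoiding permutations by shifted excedances and crossings. -/
noncomputable def shiftedGenFun {K : Type*} [CommRing K] (q p : K) (n : ℕ) (d : ℤ) : K :=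
  ∑ σ : Perm (Fin n) with IsAv132 σ, q ^ shiftedExc d σ * p ^ shiftedCrs d σ

theorem isPeakRecursive_shiftedGenFun {K : Type*} [CommRing K] (q p : K) :
    IsPeakRecursive q p (shiftedGenFun q p) where
  zero d := by
    simp [shiftedGenFun, IsAv132, shiftedExc, shiftedCrs, excPoints, crsPoints]
  succ n d := by
    classical
    rw [shiftedGenFun, ← Finset.sum_fiberwise_of_maps_to (t := antidiagonal n)
      (g := fun σ => ((σ.symm (Fin.last n) : ℕ), n - (σ.symm (Fin.last n) : ℕ)))
      fun σ _ => Finset.HasAntidiagonal.mem_antidiagonal.mpr (by simp only; omega)]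
    refine Finset.sum_congr rfl fun ⟨k, m⟩ hx => ?_
    obtain rfl : k + m = n := Finset.HasAntidiagonal.mem_antidiagonal.mp hx
    simp only [shiftedGenFun]
    rw [Finset.sum_mul_sum, ← Finset.sum_product', Finset.mul_sum]
    symm
    refine Finset.sum_bij (fun x _ => glue x.1 x.2) ?_ ?_ ?_ ?_
    · rintro ⟨α, β⟩ h
      simp only [mem_product, mem_filter, mem_univ, true_and] at h
      have hc : (glue α β).symm (Fin.last (k + m)) = ⟨k, by omega⟩ := by
        rw [Equiv.symm_apply_eq, glue_apply_center]
      simp [isAv132_glue_iff, h, hc]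
    · rintro ⟨α, β⟩ _ ⟨α', β'⟩ _ h
      obtain ⟨rfl, rfl⟩ := glue_injective h
      rfl
    · intro σ h
      simp only [mem_filter, mem_univ, true_and, Prod.mk.injEq] at h
      obtain ⟨α, β, rfl⟩ := exists_glue_eq h.1
        ((Equiv.symm_apply_eq σ).mp (Fin.ext h.2.1 : _ = (⟨k, by omega⟩ : Fin (k + m + 1)))).symm
      exact ⟨(α, β), by simpa [isAv132_glue_iff] using h.1, rfl⟩
    · rintro ⟨α, β⟩ _
      rw [shiftedExc_glue, shiftedCrs_glue]
      split_ifs <;> ring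

end ShiftedStatistics

section Symmetry

theorem excPoints_reflect {ι : Type*} [Fintype ι] (c : ℤ) (x y : ι → ℤ) :
    excPoints (fun i => c - y i) (fun i => c - x i) = excPoints x y := by
  simp only [excPoints, sub_lt_sub_iff_left]

theorem crsPoints_reflect {ι : Type*} [Fintype ι] (c : ℤ) (x y : ι → ℤ) :
    crsPoints (fun i => c - y i) (fun i => c - x i) = crsPoints x y := by
  unfold crsPoints
  rw [Finset.sum_comm]
  refine Finset.sum_congr rfl fun i _ => Finset.sum_congr rfl fun j _ => if_congr ?_ rfl rfl
  simp only [IsCrossing, sub_lt_sub_iff_left, sub_le_sub_iff_left]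
  tauto

variable {n : ℕ}

/-- The reflection of a permutation in the antidiagonal. -/
def reflect (σ : Perm (Fin n)) : Perm (Fin n) := Fin.revPerm * σ⁻¹ * Fin.revPerm

theorem reflect_reflect (σ : Perm (Fin n)) : reflect (reflect σ) = σ := by
  ext i
  simp [reflect]

theorem reflect_apply_rev (σ : Perm (Fin n)) (i : Fin n) :
    reflect σ (Fin.rev (σ i)) = Fin.rev i := by
  simp [reflect]

theorem shiftedExc_reflect (σ : Perm (Fin n)) : shiftedExc 0 (reflect σ) = shiftedExc 0 σ := by
  rw [shiftedExc, ← excPoints_comp_equiv (σ.trans Fin.revPerm), shiftedExc,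
    ← excPoints_reflect (n - 1)]
  congr 1 <;> funext i <;> simp [reflect_apply_rev, Fin.val_rev]

theorem shiftedCrs_reflect (σ : Perm (Fin n)) : shiftedCrs 0 (reflect σ) = shiftedCrs 0 σ := by
  rw [shiftedCrs, ← crsPoints_comp_equiv (σ.trans Fin.revPerm), shiftedCrs,
    ← crsPoints_reflect (n - 1)]
  congr 1 <;> funext i <;> simp [reflect_apply_rev, Fin.val_rev]

theorem strictMono_vecCons_three {i j l : Fin n} (hij : i < j) (hjl : j < l) :
    StrictMono ![i, j, l] := by
  rw [Fin.strictMono_iff_lt_succ]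
  intro a
  fin_cases a
  exacts [hij, hjl]

theorem avoids_p132_iff (σ : Perm (Fin n)) : Avoids σ p132 ↔ IsAv132 σ := by
  constructor
  · intro h i j l hij hjl hσ
    refine h ⟨![i, j, l], strictMono_vecCons_three hij hjl, ?_⟩
    simp only [Fin.forall_fin_succ, Fin.lt_def] at hσ ⊢
    simp [p132, Equiv.swap_apply_def]
    omega
  · rintro h ⟨f, hf, hσ⟩
    exact h (f 0) (f 1) (f 2) (hf (by decide)) (hf (by decide))
      ⟨(hσ 0 2).mpr (by decide), (hσ 2 1).mpr (by decide)⟩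

theorem avoids_p213_iff (σ : Perm (Fin n)) : Avoids σ p213 ↔ IsAv132 (reflect σ) := by
  constructor
  · intro h l i j hli hij hσ
    obtain ⟨l, rfl⟩ := (σ.trans Fin.revPerm).surjective l
    obtain ⟨i, rfl⟩ := (σ.trans Fin.revPerm).surjective i
    obtain ⟨j, rfl⟩ := (σ.trans Fin.revPerm).surjective j
    simp only [Equiv.trans_apply, Fin.revPerm_apply, reflect_apply_rev, Fin.rev_lt_rev]
      at hli hij hσ
    refine h ⟨![i, j, l], strictMono_vecCons_three hσ.2 hσ.1, ?_⟩
    simp only [Fin.forall_fin_succ, Fin.lt_def] at hli hij ⊢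
    simp [p213, Equiv.swap_apply_def]
    omega
  · rintro h ⟨f, hf, hσ⟩
    refine h (Fin.rev (σ (f 2))) (Fin.rev (σ (f 0))) (Fin.rev (σ (f 1))) ?_ ?_ ?_ <;>
      simp only [reflect_apply_rev, Fin.rev_lt_rev]
    exacts [(hσ 0 2).mpr (by decide), (hσ 1 0).mpr (by decide), ⟨hf (by decide), hf (by decide)⟩]

open scoped Classical in
theorem sum_avoids_p132 {K : Type*} [CommRing K] (q p : K) (n : ℕ) :
    ∑ σ : Perm (Fin n) with Avoids σ p132, q ^ exc σ * p ^ crs σ = shiftedGenFun q p n 0 := by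
  simp only [shiftedGenFun, avoids_p132_iff, shiftedExc_zero, shiftedCrs_zero]

open scoped Classical in
theorem sum_avoids_p213 {K : Type*} [CommRing K] (q p : K) (n : ℕ) :
    ∑ σ : Perm (Fin n) with Avoids σ p213, q ^ exc σ * p ^ crs σ = shiftedGenFun q p n 0 := by
  refine Finset.sum_bij' (fun σ _ => reflect σ) (fun σ _ => reflect σ) ?_ ?_
    (fun σ _ => reflect_reflect σ) (fun σ _ => reflect_reflect σ) fun σ _ => by
      rw [shiftedExc_reflect, shiftedCrs_reflect, shiftedExc_zero, shiftedCrs_zero]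
  all_goals
    intro σ hσ
    simpa [avoids_p213_iff, reflect_reflect] using hσ

end Symmetry

theorem qpCatalan_add_two (n : ℕ) : qpCatalan (n + 2) = qpCatalan (n + 1) +
    MvPolynomial.X true * ∑ x ∈ antidiagonal n,
      MvPolynomial.X false ^ x.1 * qpCatalan x.1 * qpCatalan (x.2 + 1) := by
  rw [qpCatalan, Finset.sum_attach (range (n + 1)) fun k =>
    MvPolynomial.X false ^ k * qpCatalan k * qpCatalan (n + 1 - k),
    Finset.Nat.sum_antidiagonal_eq_sum_range_succ_mk]
  congr 2
  refine Finset.sum_congr rfl fun k hk => ?_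
  rw [Nat.succ_sub (Nat.lt_succ_iff.mp (mem_range.mp hk))]

theorem shiftedGenFun_zero_eq_qpCatalan (n : ℕ) :
    shiftedGenFun (MvPolynomial.X true : MvPolynomial Bool ℤ) (MvPolynomial.X false) n 0 =
      qpCatalan n := by
  let R := MvPolynomial Bool ℤ
  let φ := algebraMap R (FractionRing R)
  have hφ : Function.Injective φ := IsFractionRing.injective R (FractionRing R)
  let p : (FractionRing R)ˣ := Units.mk0 (φ (MvPolynomial.X false))
    ((map_ne_zero_iff φ hφ).mpr (MvPolynomial.X_ne_zero _))
  have h := (isPeakRecursive_shiftedGenFun (φ (MvPolynomial.X true)) (p : FractionRing R)).apply_zero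
    (c := fun n => φ (qpCatalan n)) (by simp [qpCatalan]) (by simp [qpCatalan])
    (fun n => by simp [qpCatalan_add_two, p]) n
  refine hφ (Eq.trans ?_ h)
  simp [shiftedGenFun, p]

open scoped Classical in
open MvPolynomial in
/-- For `τ ∈ {132, 213}`: `Σ_{σ ∈ S_n(τ)} q^{exc σ} p^{crs σ} = C_n(q,p)`. -/
theorem sum_exc_crs_avoid_eq_qpCatalan (n : ℕ) (τ : Equiv.Perm (Fin 3))
    (hτ : τ = p132 ∨ τ = p213) :
    ∑ σ ∈ Finset.univ.filter (fun σ : Equiv.Perm (Fin n) => Avoids σ τ),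
      (X true : MvPolynomial Bool ℤ) ^ (exc σ) * (X false : MvPolynomial Bool ℤ) ^ (crs σ)
      = qpCatalan n := by
  rcases hτ with rfl | rfl
  · rw [sum_avoids_p132, shiftedGenFun_zero_eq_qpCatalan]
  · rw [sum_avoids_p213, shiftedGenFun_zero_eq_qpCatalan]
end

section
/- Let I_n(q) = Σ_{σ ∈ S_n(321)} q^{inv(σ)}. Then I_n(q) = C_n(q,q) for all n ≥ 0, and consequently for all n ≥ 2 the recurrence I_n(q) = I_{n−1}(q) + Σ_{k=0}^{n−2} q^{k+1} I_k(q) I_{n−1−k}(q) holds as an identity of polynomials in q. -/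
open Equiv Finset

open scoped Classical in
/-- `I_n(q) = Σ_{σ ∈ S_n(321)} q^{inv σ}` as a one-variable polynomial. -/
noncomputable def Ipoly (n : ℕ) : Polynomial ℤ :=
  ∑ σ ∈ Finset.univ.filter (fun σ : Equiv.Perm (Fin n) => Avoids σ p321),
    (Polynomial.X : Polynomial ℤ) ^ (invStat σ)

/-! ### The `q`-binomial transform -/

section QBinomialTransform

variable {A : Type*} [CommRing A]

/-- The transform `f ↦ ∑ h, q ^ (h.choose 2) * [m choose h]_q * f h`, defined through the
`q`-Pascal rule. -/
def qBinomTransform (q : A) : ℕ → (ℕ → A) → A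
  | 0, f => f 0
  | m + 1, f => qBinomTransform q m f + q ^ m * qBinomTransform q m (fun h => f (h + 1))

theorem qBinomTransform_add (q : A) (m : ℕ) (f g : ℕ → A) :
    qBinomTransform q m (fun h => f h + g h)
      = qBinomTransform q m f + qBinomTransform q m g := by
  induction m generalizing f g with
  | zero => rfl
  | succ m ih =>
    simp only [qBinomTransform]
    rw [ih f g, ih (fun h => f (h + 1)) (fun h => g (h + 1))]
    ring

theorem qBinomTransform_mul_left (q c : A) (m : ℕ) (f : ℕ → A) :
    qBinomTransform q m (fun h => c * f h) = c * qBinomTransform q m f := by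
  induction m generalizing f with
  | zero => rfl
  | succ m ih =>
    simp only [qBinomTransform]
    rw [ih f, ih (fun h => f (h + 1))]
    ring

/-- The second form of the `q`-Pascal rule. -/
theorem qBinomTransform_succ_eq (q : A) (m : ℕ) (f : ℕ → A) :
    qBinomTransform q (m + 1) f
      = qBinomTransform q m (fun h => q ^ h * (f h + f (h + 1))) := by
  induction m generalizing f with
  | zero => simp [qBinomTransform]
  | succ m ih =>
    rw [qBinomTransform, ih f, ih (fun h => f (h + 1))]
    conv_rhs => rw [qBinomTransform]
    congr 1
    have h : (fun h => q ^ (h + 1) * (f (h + 1) + f (h + 1 + 1)))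
        = fun h => q * (q ^ h * (f (h + 1) + f (h + 1 + 1))) := by
      funext h; ring
    rw [h, qBinomTransform_mul_left]
    ring

/-- The transform of a solution of the weighted Motzkin recurrence satisfies the recurrence of
the generating tree of 321-avoiding permutations. -/
theorem qBinomTransform_eq_of_motzkin (q z : A) (R : ℕ → A) (h0 : R 0 = 1 + z * (R 0 + R 1))
    (hR : ∀ h, R (h + 1) = q ^ (h + 1) * z * (R h + 2 * R (h + 1) + R (h + 2))) (m : ℕ) :
    qBinomTransform q m R = 1 + z * (qBinomTransform q (m + 1) R
      + ∑ a ∈ Finset.range m, q ^ (a + 1) * qBinomTransform q (a + 1) R) := by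
  induction m with
  | zero => simpa [qBinomTransform] using h0
  | succ m ih =>
    have hshift : (fun h => R (h + 1)) = fun h => (q * z) * (q ^ h * ((R h + R (h + 1))
        + (R (h + 1) + R (h + 1 + 1)))) := by
      funext h; linear_combination hR h
    have hdiff : q ^ m * qBinomTransform q m (fun h => R (h + 1))
        = z * (q ^ (m + 1) * qBinomTransform q (m + 1) R
          + (qBinomTransform q (m + 2) R - qBinomTransform q (m + 1) R)) := by
      rw [hshift, qBinomTransform_mul_left,
        ← qBinomTransform_succ_eq q m (fun h => R h + R (h + 1)),
        qBinomTransform_add]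
      simp only [qBinomTransform]
      ring
    rw [Finset.sum_range_succ]
    conv_lhs => rw [qBinomTransform, hdiff, ih]
    ring

end QBinomialTransform

/-! ### The diagonal Catalan polynomials -/

/-- The polynomials `C_n(q, q)`. -/
noncomputable def diagCatalan (n : ℕ) : Polynomial ℤ :=
  MvPolynomial.aeval (fun _ : Bool => (Polynomial.X : Polynomial ℤ)) (qpCatalan n)

theorem diagCatalan_zero : diagCatalan 0 = 1 := by simp [diagCatalan, qpCatalan]

theorem diagCatalan_one : diagCatalan 1 = 1 := by simp [diagCatalan, qpCatalan]

theorem diagCatalan_add_two (n : ℕ) :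
    diagCatalan (n + 2) = diagCatalan (n + 1) + ∑ k ∈ Finset.range (n + 1),
      (Polynomial.X : Polynomial ℤ) ^ (k + 1) * diagCatalan k * diagCatalan (n + 1 - k) := by
  have h := Finset.sum_attach (Finset.range (n + 1)) (fun k =>
    (MvPolynomial.X false : MvPolynomial Bool ℤ) ^ k * qpCatalan k * qpCatalan (n + 1 - k))
  rw [diagCatalan, qpCatalan, h]
  simp only [map_add, map_mul, map_sum, map_pow, MvPolynomial.aeval_X, Finset.mul_sum,
    diagCatalan]
  congr 1
  refine Finset.sum_congr rfl fun k _ => ?_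
  ring

/-- The generating function `∑ n, C_n(q, q) z ^ n`. -/
noncomputable def diagCatalanSeries : PowerSeries (Polynomial ℤ) := PowerSeries.mk diagCatalan

theorem diagCatalanSeries_sub_one :
    diagCatalanSeries - 1 = PowerSeries.X * diagCatalanSeries
      + PowerSeries.C (Polynomial.X : Polynomial ℤ) * PowerSeries.X
        * PowerSeries.rescale Polynomial.X diagCatalanSeries * (diagCatalanSeries - 1) := by
  have hassoc : PowerSeries.C (Polynomial.X : Polynomial ℤ) * PowerSeries.X
        * PowerSeries.rescale Polynomial.X diagCatalanSeries * (diagCatalanSeries - 1)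
      = PowerSeries.X * (PowerSeries.C (Polynomial.X : Polynomial ℤ) *
        (PowerSeries.rescale Polynomial.X diagCatalanSeries * (diagCatalanSeries - 1))) := by
    ring
  rw [hassoc]
  ext1 n
  cases n with
  | zero => simp [diagCatalanSeries, diagCatalan_zero]
  | succ n =>
    simp only [map_sub, map_add, PowerSeries.coeff_succ_X_mul, PowerSeries.coeff_C_mul]
    simp only [PowerSeries.coeff_mul, PowerSeries.coeff_rescale, map_sub]
    rw [Finset.Nat.sum_antidiagonal_eq_sum_range_succ_mk, Finset.sum_range_succ]
    simp only [diagCatalanSeries, PowerSeries.coeff_mk, PowerSeries.coeff_one]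
    cases n with
    | zero => simp [diagCatalan_zero, diagCatalan_one]
    | succ n =>
      rw [diagCatalan_add_two]
      simp only [Nat.sub_self, diagCatalan_zero]
      simp only [Finset.mul_sum, if_true, sub_self, mul_zero, add_zero,
        Nat.add_eq_zero_iff, one_ne_zero, and_false, if_false, sub_zero]
      congr 1
      refine Finset.sum_congr rfl fun k hk => ?_
      have hk' : n + 1 - k ≠ 0 := by have := Finset.mem_range.mp hk; omega
      rw [if_neg hk']
      ring

/-- The `q`-shifts of the generating function solve a weighted Motzkin recurrence. -/
theorem exists_motzkin_solution : ∃ R : ℕ → PowerSeries (Polynomial ℤ),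
    R 0 = diagCatalanSeries ∧ R 0 = 1 + PowerSeries.X * (R 0 + R 1) ∧
    ∀ h, R (h + 1) = PowerSeries.C (Polynomial.X : Polynomial ℤ) ^ (h + 1) * PowerSeries.X
      * (R h + 2 * R (h + 1) + R (h + 2)) := by
  set q : PowerSeries (Polynomial ℤ) := PowerSeries.C (Polynomial.X : Polynomial ℤ)
  set z : PowerSeries (Polynomial ℤ) := PowerSeries.X with hz
  let I : ℕ → PowerSeries (Polynomial ℤ) := fun h =>
    PowerSeries.rescale ((Polynomial.X : Polynomial ℤ) ^ h) diagCatalanSeries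
  have hI0 : I 0 = diagCatalanSeries := by simp [I]
  have hC : ∀ a b : Polynomial ℤ, PowerSeries.rescale a (PowerSeries.C b) = PowerSeries.C b := by
    intro a b
    ext1 n
    rw [PowerSeries.coeff_rescale, PowerSeries.coeff_C]
    split_ifs with hn <;> simp [hn]
  have hI : ∀ h, I h - 1 = q ^ h * z * I h + q ^ (h + 1) * z * I (h + 1) * (I h - 1) := by
    intro h
    have key := congrArg (PowerSeries.rescale ((Polynomial.X : Polynomial ℤ) ^ h))
      diagCatalanSeries_sub_one
    simp only [map_sub, map_add, map_mul, map_one, PowerSeries.rescale_X,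
      PowerSeries.rescale_rescale, hC, map_pow] at key
    rw [← pow_succ'] at key
    change I h - 1 = q ^ h * z * I h + q * (q ^ h * z) * I (h + 1) * (I h - 1) at key
    rw [pow_succ]
    linear_combination key
  have hunit : ∀ h, ∃ B, (1 - q ^ h * z * I h) * B = 1 := by
    intro h
    refine IsUnit.exists_right_inv (PowerSeries.isUnit_iff_constantCoeff.mpr ?_)
    simp [hz]
  choose B hB using hunit
  have hIB : ∀ h, I h - 1 = q ^ h * z * I h * B (h + 1) := fun h => by
    linear_combination B (h + 1) * hI h - (I h - 1) * hB (h + 1)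
  let R : ℕ → PowerSeries (Polynomial ℤ) := fun h =>
    diagCatalanSeries * ∏ j ∈ Finset.range h, (q ^ (j + 1) * z * I (j + 1) * B (j + 1))
  have hRs : ∀ h, R (h + 1) = R h * (q ^ (h + 1) * z * I (h + 1) * B (h + 1)) := fun h => by
    simp only [R, Finset.prod_range_succ, mul_assoc]
  have hR0 : R 0 = I 0 := by simp [R, hI0]
  refine ⟨R, hR0.trans hI0, ?_, fun h => ?_⟩
  · rw [hRs 0, hR0]
    have h0 := hIB 0
    have h1 := hB 1
    simp only [zero_add, pow_zero, one_mul] at h0 ⊢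
    linear_combination h0 + z * I 0 * h1
  · rw [hRs (h + 1), hRs h]
    have h1 := hB (h + 1)
    have h2 := hB (h + 2)
    have h3 := hIB (h + 1)
    linear_combination R h * (q ^ (h + 1) * z) * (B (h + 1) * h3 + h1
      + q ^ (h + 1) * z * I (h + 1) * B (h + 1) * h2)

/-- The generating-tree numbers built from the diagonal Catalan polynomials. -/
theorem exists_generatingTree : ∃ T : ℕ → ℕ → Polynomial ℤ,
    (∀ k, T k 0 = diagCatalan k) ∧ (∀ m, T 0 m = 1) ∧
    ∀ k m, T (k + 1) m = T k (m + 1)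
      + ∑ a ∈ Finset.range m, (Polynomial.X : Polynomial ℤ) ^ (a + 1) * T k (a + 1) := by
  obtain ⟨R, hRI, hR0, hR⟩ := exists_motzkin_solution
  have key := qBinomTransform_eq_of_motzkin _ _ R hR0 hR
  refine ⟨fun k m => PowerSeries.coeff k (qBinomTransform (PowerSeries.C Polynomial.X) m R),
    fun k => ?_, fun m => ?_, fun k m => ?_⟩
  · simp [qBinomTransform, hRI, diagCatalanSeries]
  · beta_reduce
    rw [key m]
    simp
  · beta_reduce
    rw [key m]
    simp only [map_add, PowerSeries.coeff_succ_X_mul, map_sum, ← map_pow,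
      PowerSeries.coeff_C_mul]
    simp [PowerSeries.coeff_one]

/-! ### Inserting a first letter -/

/-- The permutation with first value `a` whose remaining values are order-isomorphic to `σ`. -/
def consPerm {n : ℕ} (a : Fin (n + 1)) (σ : Equiv.Perm (Fin n)) : Equiv.Perm (Fin (n + 1)) :=
  (finSuccEquiv' 0).trans ((Equiv.optionCongr σ).trans (finSuccEquiv' a).symm)

@[simp]
theorem consPerm_zero {n : ℕ} (a : Fin (n + 1)) (σ : Equiv.Perm (Fin n)) :
    consPerm a σ 0 = a := by
  simp [consPerm]

@[simp]
theorem consPerm_succ {n : ℕ} (a : Fin (n + 1)) (σ : Equiv.Perm (Fin n)) (i : Fin n) :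
    consPerm a σ i.succ = a.succAbove (σ i) := by
  rw [← Fin.succAbove_zero]
  simp only [consPerm, Equiv.trans_apply, finSuccEquiv'_succAbove]
  simp

theorem consPerm_bijective (n : ℕ) :
    Function.Bijective (fun x : Fin (n + 1) × Equiv.Perm (Fin n) => consPerm x.1 x.2) := by
  rw [Fintype.bijective_iff_injective_and_card]
  refine ⟨?_, by simp [Fintype.card_perm, Nat.factorial_succ]⟩
  rintro ⟨a, σ⟩ ⟨b, τ⟩ h
  have h0 : a = b := by simpa using DFunLike.congr_fun h 0
  subst h0
  refine Prod.ext rfl (Equiv.ext fun i => ?_)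
  simpa using DFunLike.congr_fun h i.succ

theorem invStat_eq_sum {n : ℕ} (σ : Equiv.Perm (Fin n)) :
    invStat σ = ∑ i, ∑ j, if i < j ∧ σ j < σ i then 1 else 0 := by
  rw [invStat, Finset.card_filter, ← Finset.univ_product_univ, Finset.sum_product]

theorem invStat_consPerm {n : ℕ} (a : Fin (n + 1)) (σ : Equiv.Perm (Fin n)) :
    invStat (consPerm a σ) = a + invStat σ := by
  have hcount : (∑ j, if a.succAbove (σ j) < a then 1 else 0) = (a : ℕ) := by
    rw [Equiv.sum_comp σ (fun j => if a.succAbove j < a then 1 else 0)]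
    simp only [Fin.succAbove_lt_iff_castSucc_lt]
    simp only [Fin.lt_def, Fin.val_castSucc]
    rw [Fin.sum_univ_eq_sum_range (fun j => if j < (a : ℕ) then 1 else 0) n,
      ← Finset.card_filter]
    have hfilter : (Finset.range n).filter (fun j => j < (a : ℕ)) = Finset.range a := by
      ext j
      have := a.isLt
      simp only [Finset.mem_filter, Finset.mem_range]
      omega
    rw [hfilter, Finset.card_range]
  simp only [invStat_eq_sum, Fin.sum_univ_succ, consPerm_zero, consPerm_succ,
    Fin.succ_pos, Fin.not_lt_zero, Fin.succ_lt_succ_iff, Fin.succAbove_lt_succAbove_iff,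
    true_and, false_and, if_false, zero_add, hcount]

/-- The values smaller than `b` occur in increasing order in `σ`. -/
def SmallIncreasing {n : ℕ} (σ : Equiv.Perm (Fin n)) (b : ℕ) : Prop :=
  ∀ i j, i < j → σ j < σ i → b ≤ σ i

theorem avoids_p321_iff {n : ℕ} (σ : Equiv.Perm (Fin n)) :
    Avoids σ p321 ↔ ∀ i j k, i < j → j < k → σ j < σ i → σ k < σ j → False := by
  have hp : p321 0 = 2 ∧ p321 1 = 1 ∧ p321 2 = 0 := by decide
  obtain ⟨hp0, hp1, hp2⟩ := hp
  rw [Avoids, not_iff_comm]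
  push Not
  constructor
  · rintro ⟨i, j, k, hij, hjk, h1, h2, -⟩
    refine ⟨![i, j, k], ?_, ?_⟩
    · rw [Fin.strictMono_iff_lt_succ]
      intro x; fin_cases x <;> simpa
    · intro x y
      fin_cases x <;> fin_cases y <;> simp [hp0, hp1, hp2] <;> order
  · rintro ⟨f, hf, h⟩
    refine ⟨f 0, f 1, f 2, hf (by decide), hf (by decide), ?_, ?_, trivial⟩
    · rw [h, hp0, hp1]; decide
    · rw [h, hp1, hp2]; decide

theorem avoids_consPerm_iff {n : ℕ} (a : Fin (n + 1)) (σ : Equiv.Perm (Fin n)) :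
    Avoids (consPerm a σ) p321 ↔ Avoids σ p321 ∧ SmallIncreasing σ a := by
  simp only [avoids_p321_iff, SmallIncreasing]
  constructor
  · intro h
    refine ⟨fun i j k hij hjk h1 h2 => h i.succ j.succ k.succ (by simpa) (by simpa)
      (by simpa) (by simpa), fun i j hij h1 => ?_⟩
    by_contra! hlt
    refine h 0 i.succ j.succ (Fin.succ_pos i) (by simpa) ?_ (by simpa)
    rw [consPerm_zero, consPerm_succ, Fin.succAbove_lt_iff_castSucc_lt]
    exact hlt
  · rintro ⟨hσ, ha⟩ i j k hij hjk h1 h2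
    obtain ⟨j, rfl⟩ := Fin.exists_succ_eq.mpr (Fin.ne_zero_of_lt hij)
    obtain ⟨k, rfl⟩ := Fin.exists_succ_eq.mpr (Fin.ne_zero_of_lt hjk)
    have h2' : σ k < σ j := by simpa using h2
    have hjk' : j < k := by simpa using hjk
    cases i using Fin.cases with
    | zero =>
      rw [consPerm_zero, consPerm_succ, Fin.succAbove_lt_iff_castSucc_lt] at h1
      exact absurd (ha j k hjk' h2') (not_le.mpr h1)
    | succ i => exact hσ i j k (by simpa using hij) hjk' (by simpa using h1) h2'

open scoped Classical in
/-- The number of smallest values that occur in increasing order in `σ`. -/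
noncomputable def smallRun {n : ℕ} (σ : Equiv.Perm (Fin n)) : ℕ :=
  Nat.findGreatest (SmallIncreasing σ) n

theorem le_smallRun_iff {n : ℕ} (σ : Equiv.Perm (Fin n)) (b : ℕ) :
    b ≤ smallRun σ ↔ b ≤ n ∧ SmallIncreasing σ b := by
  classical
  constructor
  · intro h
    have hs : SmallIncreasing σ (smallRun σ) :=
      Nat.findGreatest_spec (P := SmallIncreasing σ) (Nat.zero_le n)
        (fun _ _ _ _ => Nat.zero_le _)
    exact ⟨h.trans (Nat.findGreatest_le n), fun i j hij h1 => h.trans (hs i j hij h1)⟩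
  · rintro ⟨hb, h⟩
    exact Nat.le_findGreatest hb h

theorem smallIncreasing_consPerm_zero {n : ℕ} (σ : Equiv.Perm (Fin n)) (b : ℕ) :
    SmallIncreasing (consPerm 0 σ) b ↔ SmallIncreasing σ (b - 1) := by
  simp [SmallIncreasing, Fin.forall_fin_succ]

theorem smallIncreasing_consPerm_of_pos {n : ℕ} {a : Fin (n + 1)} {σ : Equiv.Perm (Fin n)}
    (ha : 0 < (a : ℕ)) (hσ : SmallIncreasing σ a) (b : ℕ) :
    SmallIncreasing (consPerm a σ) b ↔ b ≤ a := by
  constructor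
  · intro h
    obtain ⟨x, hx⟩ := (consPerm a σ).surjective 0
    cases x using Fin.cases with
    | zero =>
      rw [consPerm_zero] at hx
      simp [hx] at ha
    | succ x =>
      simpa using h 0 x.succ (Fin.succ_pos x) (by rw [hx, consPerm_zero]; exact ha)
  · intro hb i j hij h1
    refine hb.trans ?_
    obtain ⟨j, rfl⟩ := Fin.exists_succ_eq.mpr (Fin.ne_zero_of_lt hij)
    cases i using Fin.cases with
    | zero => simp
    | succ i =>
      have h := hσ i j (by simpa using hij) (by simpa using h1)
      rw [consPerm_succ, Fin.succAbove_of_le_castSucc _ _ (by exact h), Fin.val_succ]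
      omega

theorem smallRun_consPerm_zero {n : ℕ} (σ : Equiv.Perm (Fin n)) :
    smallRun (consPerm 0 σ) = smallRun σ + 1 := by
  refine eq_of_forall_le_iff fun b => ?_
  rw [le_smallRun_iff, smallIncreasing_consPerm_zero, ← Nat.sub_le_iff_le_add,
    ← Nat.sub_le_iff_le_add, le_smallRun_iff]

theorem smallRun_consPerm_of_pos {n : ℕ} {a : Fin (n + 1)} {σ : Equiv.Perm (Fin n)}
    (ha : 0 < (a : ℕ)) (hσ : SmallIncreasing σ a) : smallRun (consPerm a σ) = a := by
  refine eq_of_forall_le_iff fun b => ?_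
  rw [le_smallRun_iff, smallIncreasing_consPerm_of_pos ha hσ]
  have := a.isLt
  omega

/-! ### The generating tree -/

open scoped Classical in
/-- The inversion enumerator of 321-avoiding permutations, weighted by `f` at `smallRun`. -/
noncomputable def weightedIpoly (n : ℕ) (f : ℕ → Polynomial ℤ) : Polynomial ℤ :=
  ∑ σ : Equiv.Perm (Fin n),
    if Avoids σ p321 then (Polynomial.X : Polynomial ℤ) ^ invStat σ * f (smallRun σ) else 0

theorem weightedIpoly_one (n : ℕ) : weightedIpoly n (fun _ => 1) = Ipoly n := by
  simp [weightedIpoly, Ipoly, Finset.sum_filter]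

theorem weightedIpoly_zero (f : ℕ → Polynomial ℤ) : weightedIpoly 0 f = f 0 := by
  have hav : ∀ σ : Equiv.Perm (Fin 0), Avoids σ p321 := fun σ =>
    (avoids_p321_iff σ).mpr fun i => i.elim0
  simp [weightedIpoly, hav, smallRun, invStat]

theorem weightedIpoly_succ (n : ℕ) (f : ℕ → Polynomial ℤ) :
    weightedIpoly (n + 1) f = weightedIpoly n (fun m => f (m + 1)
      + ∑ a ∈ Finset.range m, (Polynomial.X : Polynomial ℤ) ^ (a + 1) * f (a + 1)) := by
  classical
  rw [weightedIpoly, ← (consPerm_bijective n).sum_comp, Fintype.sum_prod_type_right,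
    weightedIpoly]
  refine Finset.sum_congr rfl fun σ _ => ?_
  simp only [avoids_consPerm_iff, invStat_consPerm]
  by_cases hσ : Avoids σ p321
  · simp only [hσ, true_and, if_true]
    have hz : SmallIncreasing σ ((0 : Fin (n + 1)) : ℕ) := fun _ _ _ _ => Nat.zero_le _
    have hterm : ∀ i : Fin n,
        (if SmallIncreasing σ (i.succ : ℕ) then (Polynomial.X : Polynomial ℤ)
          ^ ((i.succ : ℕ) + invStat σ) * f (smallRun (consPerm i.succ σ)) else 0)
        = if (i : ℕ) < smallRun σ then (Polynomial.X : Polynomial ℤ) ^ invStat σ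
          * (Polynomial.X ^ ((i : ℕ) + 1) * f ((i : ℕ) + 1)) else 0 := by
      intro i
      have hiff : SmallIncreasing σ (i.succ : ℕ) ↔ (i : ℕ) < smallRun σ := by
        rw [← Nat.succ_le_iff, le_smallRun_iff, Fin.val_succ]
        simp
      by_cases hi : SmallIncreasing σ (i.succ : ℕ)
      · rw [if_pos hi, if_pos (hiff.mp hi), smallRun_consPerm_of_pos (by simp) hi, Fin.val_succ]
        ring
      · rw [if_neg hi, if_neg (mt hiff.mpr hi)]
    have hle : smallRun σ ≤ n := ((le_smallRun_iff σ _).mp le_rfl).1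
    rw [Fin.sum_univ_succ, if_pos hz, smallRun_consPerm_zero, Finset.sum_congr rfl
      (fun i _ => hterm i), Fin.sum_univ_eq_sum_range (fun i => if i < smallRun σ then
        (Polynomial.X : Polynomial ℤ) ^ invStat σ * (Polynomial.X ^ (i + 1) * f (i + 1)) else 0),
      ← Finset.sum_filter, mul_add, Finset.mul_sum]
    congr 1
    · simp
    · refine Finset.sum_congr ?_ fun _ _ => rfl
      ext i
      simp only [Finset.mem_filter, Finset.mem_range]
      omega
  · simp [hσ]

theorem Ipoly_eq_diagCatalan (n : ℕ) : Ipoly n = diagCatalan n := by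
  obtain ⟨T, hT0, hT1, hT⟩ := exists_generatingTree
  have key : ∀ k m, weightedIpoly m (T k) = Ipoly (m + k) := by
    intro k
    induction k with
    | zero =>
      intro m
      rw [funext hT1, weightedIpoly_one, add_zero]
    | succ k ih =>
      intro m
      rw [funext (hT k), ← weightedIpoly_succ, ih, add_right_comm, add_assoc]
  rw [← hT0, ← weightedIpoly_zero (T n), key, zero_add]

/-- `I_n(q) = C_n(q,q)` for all `n`, and consequently `I_n` satisfies the recurrence
`I_n(q) = I_{n-1}(q) + Σ_{k=0}^{n-2} q^{k+1} I_k(q) I_{n-1-k}(q)` for all `n ≥ 2`. -/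
theorem Ipoly_eq_qpCatalan_diag_and_recurrence :
    (∀ n : ℕ, Ipoly n
        = MvPolynomial.aeval (fun _ : Bool => (Polynomial.X : Polynomial ℤ)) (qpCatalan n)) ∧
    (∀ n : ℕ, 2 ≤ n → Ipoly n = Ipoly (n - 1)
        + ∑ k ∈ Finset.range (n - 1),
            (Polynomial.X : Polynomial ℤ) ^ (k + 1) * Ipoly k * Ipoly (n - 1 - k)) := by
  refine ⟨Ipoly_eq_diagCatalan, fun n hn => ?_⟩
  obtain ⟨n, rfl⟩ := Nat.exists_eq_add_of_le' hn
  simp only [Ipoly_eq_diagCatalan]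
  exact diagCatalan_add_two n
end

section
/- The direct product ⊗ is a stable and associative operation on 132-avoiding permutations: for all 132-avoiding permutations α, β, γ, the permutation α⊗β is 132-avoiding, and (α⊗β)⊗γ = α⊗(β⊗γ). -/
open Equiv Finset

/-- `T(σ) = {i : i < σ(i) and i < σ⁻¹(i)}`. -/
def Tset {n : ℕ} (σ : Equiv.Perm (Fin n)) : Finset (Fin n) :=
  Finset.univ.filter (fun i : Fin n => (i : ℕ) < σ i ∧ (i : ℕ) < σ⁻¹ i)

lemma Tset_card_le {n : ℕ} (σ : Equiv.Perm (Fin n)) : (Tset σ).card ≤ n :=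
  (Finset.card_le_univ _).trans (by simp)

/-- The equivalence `Fin m ⊕ Fin n ≃ Fin (m+n)` sending the `Fin m` block to the
positions `k, k+1, …, k+m-1` (in order) and the `Fin n` part to the remaining
positions (in order): `inr i ↦ i` if `i < k` and `inr i ↦ m + i` otherwise. -/
noncomputable def blockEquiv (m n k : ℕ) (hk : k ≤ n) : Fin m ⊕ Fin n ≃ Fin (m + n) :=
  Equiv.ofBijective
    (Sum.elim
      (fun j : Fin m => (⟨k + (j : ℕ), by have := j.isLt; omega⟩ : Fin (m + n)))
      (fun i : Fin n => if (i : ℕ) < k then (⟨(i : ℕ), by have := i.isLt; omega⟩ : Fin (m + n))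
          else ⟨m + (i : ℕ), by have := i.isLt; omega⟩))
    (by
      rw [Fintype.bijective_iff_injective_and_card]
      refine ⟨?_, by simp⟩
      rintro (j | i) (j' | i') h
      · simp only [Sum.elim_inl, Fin.mk.injEq] at h
        exact congrArg Sum.inl (Fin.ext (by omega))
      · exfalso
        have hj := j.isLt; have hi := i'.isLt
        simp only [Sum.elim_inl, Sum.elim_inr] at h
        split_ifs at h <;> simp only [Fin.mk.injEq] at h <;> omega
      · exfalso
        have hi := i.isLt; have hj := j'.isLt
        simp only [Sum.elim_inl, Sum.elim_inr] at h
        split_ifs at h <;> simp only [Fin.mk.injEq] at h <;> omega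
      · have hi := i.isLt; have hi' := i'.isLt
        simp only [Sum.elim_inr] at h
        split_ifs at h <;> simp only [Fin.mk.injEq] at h <;>
          exact congrArg Sum.inr (Fin.ext (by omega)))

/-- The direct product `α ⊗ β` of permutations `α` of length `m` and `β` of length `n`:
with `k = |T(β)|` (the 0-indexed form of `k = 1 + |T(β)|`), the block of positions
`k, …, k+m-1` carries the values of `α` shifted by `k`, and the remaining positions
carry the values of `β` in order, with values `≥ k` shifted up by `m`. -/
noncomputable def dprod {m n : ℕ} (α : Equiv.Perm (Fin m)) (β : Equiv.Perm (Fin n)) :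
    Equiv.Perm (Fin (m + n)) :=
  (blockEquiv m n (Tset β).card (Tset_card_le β)).permCongr (Equiv.sumCongr α β)

lemma not_forbidden_of_avoids132 {n : ℕ} {σ : Equiv.Perm (Fin n)} (h : Avoids σ p132)
    {a b c : Fin n} (hab : a < b) (hbc : b < c) (hac : σ a < σ c) : ¬ σ c < σ b := by
  intro hcb
  refine h ⟨![a, b, c], ?_, ?_⟩
  · intro x y hxy
    have hac' := hab.trans hbc
    fin_cases x <;> fin_cases y <;> simp_all
  · have h0 : p132 0 = 0 := by decide
    have h1 : p132 1 = 2 := by decide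
    have h2 : p132 2 = 1 := by decide
    have hab' := hac.trans hcb
    intro x y
    fin_cases x <;> fin_cases y <;>
      simp [h0, h1, h2, hac, hcb, hab', hac.le, hcb.le, hab'.le]

lemma avoids132_of_forall {n : ℕ} {σ : Equiv.Perm (Fin n)}
    (h : ∀ a b c : Fin n, a < b → b < c → σ a < σ c → ¬ σ c < σ b) : Avoids σ p132 := by
  rintro ⟨f, hf, hσ⟩
  exact h (f 0) (f 1) (f 2) (hf (by decide)) (hf (by decide))
    ((hσ 0 2).2 (by decide)) ((hσ 2 1).2 (by decide))

lemma mem_Tset {n : ℕ} {σ : Equiv.Perm (Fin n)} {i : Fin n} :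
    i ∈ Tset σ ↔ i < σ i ∧ i < σ⁻¹ i := by
  simp [Tset]

/-- For a 132-avoiding permutation, `T(σ)` is an initial segment. -/
lemma mem_Tset_iff_lt_card {n : ℕ} {σ : Equiv.Perm (Fin n)} (h : Avoids σ p132) (i : Fin n) :
    i ∈ Tset σ ↔ (i : ℕ) < (Tset σ).card := by
  have lower : ∀ i j : Fin n, i ∈ Tset σ → j ≤ i → j ∈ Tset σ := by
    intro i j hi hji
    rcases hji.eq_or_lt with rfl | hji
    · exact hi
    rw [mem_Tset] at hi ⊢
    by_contra hj
    rcases not_and_or.1 hj with hj | hj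
    · exact not_forbidden_of_avoids132 h hji hi.2
        (by simpa using (not_lt.1 hj).trans_lt hji) (by simpa using hi.1)
    · exact not_forbidden_of_avoids132 h ((not_lt.1 hj).trans_lt hji) hi.2
        (by simpa using hji) (by simpa using hi.1)
  constructor
  · intro hi
    have hs : Finset.Iic i ⊆ Tset σ := fun j hj => lower i j hi (Finset.mem_Iic.1 hj)
    have := Finset.card_le_card hs
    rw [Fin.card_Iic] at this
    omega
  · intro hi
    by_contra hn
    have hs : Tset σ ⊆ Finset.Iio i := fun j hj =>
      Finset.mem_Iio.2 (lt_of_not_ge fun hij => hn (lower j i hj hij))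
    have := Finset.card_le_card hs
    rw [Fin.card_Iio] at this
    omega

lemma card_Tset_le_apply {n : ℕ} {σ : Equiv.Perm (Fin n)} (h : Avoids σ p132) {i : Fin n}
    (hi : (i : ℕ) < (Tset σ).card) : (Tset σ).card ≤ σ i := by
  by_contra! hv
  have h₁ := (mem_Tset.1 ((mem_Tset_iff_lt_card h i).2 hi)).1
  have h₂ := (mem_Tset.1 ((mem_Tset_iff_lt_card h (σ i)).2 hv)).2
  rw [Equiv.Perm.inv_def, Equiv.symm_apply_apply] at h₂
  exact lt_asymm h₁ h₂

/-- A 132-avoiding permutation is increasing on the positions `≥ |T(σ)|` that carry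
values `≥ |T(σ)|`. -/
lemma not_apply_lt_apply_of_card_Tset_le {n : ℕ} {σ : Equiv.Perm (Fin n)} (h : Avoids σ p132)
    {p q : Fin n} (hp : (Tset σ).card ≤ p) (hpq : p < q) (hq' : (Tset σ).card ≤ σ q) :
    ¬ σ q < σ p := by
  intro hqp
  let t : Fin n := ⟨(Tset σ).card, hp.trans_lt p.isLt⟩
  have htp : t ≤ p := hp
  have htq : t ≤ σ q := hq'
  have ht : ¬ (t < σ t ∧ t < σ⁻¹ t) := by
    rw [← mem_Tset, mem_Tset_iff_lt_card h]
    exact lt_irrefl _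
  obtain ⟨s, hs, hst⟩ : ∃ s : Fin n, s ≤ t ∧ σ s ≤ t := by
    rcases not_and_or.1 ht with ht | ht
    · exact ⟨t, le_rfl, not_lt.1 ht⟩
    · exact ⟨σ⁻¹ t, not_lt.1 ht, by simp⟩
  have hsp : s < p := (hs.trans htp).lt_of_ne (by
    rintro rfl
    exact absurd (hqp.trans_le hst) (not_lt.2 htq))
  have hsq : σ s < σ q :=
    (hst.trans htq).lt_of_ne fun he => (hsp.trans hpq).ne (σ.injective he)
  exact not_forbidden_of_avoids132 h hsp hpq hsq hqp

lemma blockEquiv_inl_val {m n k : ℕ} (hk : k ≤ n) (j : Fin m) :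
    (blockEquiv m n k hk (Sum.inl j) : ℕ) = k + j := by
  simp only [blockEquiv, Equiv.ofBijective_apply, Sum.elim_inl]

lemma blockEquiv_inr_val {m n k : ℕ} (hk : k ≤ n) (i : Fin n) :
    (blockEquiv m n k hk (Sum.inr i) : ℕ) = if (i : ℕ) < k then (i : ℕ) else m + i := by
  simp only [blockEquiv, Equiv.ofBijective_apply, Sum.elim_inr]
  split_ifs <;> rfl

lemma blockEquiv_inl_lt_inl {m n k : ℕ} (hk : k ≤ n) {i j : Fin m} :
    blockEquiv m n k hk (Sum.inl i) < blockEquiv m n k hk (Sum.inl j) ↔ i < j := by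
  rw [Fin.lt_def, Fin.lt_def, blockEquiv_inl_val, blockEquiv_inl_val]
  omega

lemma blockEquiv_inr_lt_inr {m n k : ℕ} (hk : k ≤ n) {i j : Fin n} :
    blockEquiv m n k hk (Sum.inr i) < blockEquiv m n k hk (Sum.inr j) ↔ i < j := by
  rw [Fin.lt_def, Fin.lt_def, blockEquiv_inr_val, blockEquiv_inr_val]
  split_ifs <;> omega

lemma blockEquiv_inl_lt_inr {m n k : ℕ} (hk : k ≤ n) {i : Fin m} {j : Fin n} :
    blockEquiv m n k hk (Sum.inl i) < blockEquiv m n k hk (Sum.inr j) ↔ k ≤ j := by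
  rw [Fin.lt_def, blockEquiv_inl_val, blockEquiv_inr_val]
  split_ifs <;> omega

lemma blockEquiv_inr_lt_inl {m n k : ℕ} (hk : k ≤ n) {i : Fin n} {j : Fin m} :
    blockEquiv m n k hk (Sum.inr i) < blockEquiv m n k hk (Sum.inl j) ↔ (i : ℕ) < k := by
  rw [Fin.lt_def, blockEquiv_inl_val, blockEquiv_inr_val]
  split_ifs <;> omega

lemma permCongr_inv_apply {X Y : Type*} (e : X ≃ Y) (p : Equiv.Perm X) (x : X) :
    (e.permCongr p)⁻¹ (e x) = e (p⁻¹ x) := by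
  rw [Equiv.Perm.inv_eq_iff_eq]
  simp [Equiv.permCongr_apply]

section dprod

variable {m n : ℕ} (α : Equiv.Perm (Fin m)) (β : Equiv.Perm (Fin n))

/-- The embedding of the disjoint union of positions that underlies `dprod α β`. -/
noncomputable abbrev dprodEquiv : Fin m ⊕ Fin n ≃ Fin (m + n) :=
  blockEquiv m n (Tset β).card (Tset_card_le β)

lemma dprod_inl (j : Fin m) :
    dprod α β (dprodEquiv β (Sum.inl j)) = dprodEquiv β (Sum.inl (α j)) := by
  simp [dprod, Equiv.permCongr_apply]

lemma dprod_inr (i : Fin n) :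
    dprod α β (dprodEquiv (m := m) β (Sum.inr i)) = dprodEquiv β (Sum.inr (β i)) := by
  simp [dprod, Equiv.permCongr_apply]

lemma dprod_inv_inl (j : Fin m) :
    (dprod α β)⁻¹ (dprodEquiv β (Sum.inl j)) = dprodEquiv β (Sum.inl (α⁻¹ j)) :=
  permCongr_inv_apply _ _ _

lemma dprod_inv_inr (i : Fin n) :
    (dprod α β)⁻¹ (dprodEquiv (m := m) β (Sum.inr i)) = dprodEquiv β (Sum.inr (β⁻¹ i)) :=
  permCongr_inv_apply _ _ _

lemma Tset_dprod :
    Tset (dprod α β) = ((Tset α).disjSum (Tset β)).map (dprodEquiv β).toEmbedding := by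
  ext x
  obtain ⟨x, rfl⟩ := (dprodEquiv (m := m) β).surjective x
  rw [Finset.mem_map_equiv, Equiv.symm_apply_apply]
  rcases x with j | i
  · rw [mem_Tset, dprod_inl, dprod_inv_inl, blockEquiv_inl_lt_inl, blockEquiv_inl_lt_inl,
      Finset.inl_mem_disjSum, mem_Tset]
  · rw [mem_Tset, dprod_inr, dprod_inv_inr, blockEquiv_inr_lt_inr, blockEquiv_inr_lt_inr,
      Finset.inr_mem_disjSum, mem_Tset]

lemma card_Tset_dprod : (Tset (dprod α β)).card = (Tset α).card + (Tset β).card := by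
  rw [Tset_dprod, Finset.card_map, Finset.card_disjSum]

variable {α β}

lemma avoids132_dprod (hα : Avoids α p132) (hβ : Avoids β p132) :
    Avoids (dprod α β) p132 := by
  refine avoids132_of_forall fun a b c => ?_
  obtain ⟨a, rfl⟩ := (dprodEquiv (m := m) β).surjective a
  obtain ⟨b, rfl⟩ := (dprodEquiv (m := m) β).surjective b
  obtain ⟨c, rfl⟩ := (dprodEquiv (m := m) β).surjective c
  rcases a with a | a <;> rcases b with b | b <;> rcases c with c | c <;>
    simp only [dprod_inl, dprod_inr, blockEquiv_inl_lt_inl, blockEquiv_inr_lt_inr,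
      blockEquiv_inl_lt_inr, blockEquiv_inr_lt_inl] <;>
    intro hab hbc hac hcb
  · exact not_forbidden_of_avoids132 hα hab hbc hac hcb
  · omega
  · omega
  · exact not_apply_lt_apply_of_card_Tset_le hβ hab hbc hac hcb
  · exact absurd hac (not_lt.2 (card_Tset_le_apply hβ hab))
  · have := card_Tset_le_apply hβ hab
    omega
  · have := card_Tset_le_apply hβ (i := a) (by omega)
    omega
  · exact not_forbidden_of_avoids132 hβ hab hbc hac hcb

end dprod

lemma dprod_assoc {m n r : ℕ}
    (α : Equiv.Perm (Fin m)) (β : Equiv.Perm (Fin n)) (γ : Equiv.Perm (Fin r)) :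
    (finCongr (add_assoc m n r)).permCongr (dprod (dprod α β) γ) = dprod α (dprod β γ) := by
  have hβ := Tset_card_le β
  have hcard := card_Tset_dprod β γ
  have hl : ∀ j : Fin m, finCongr (add_assoc m n r)
      (dprodEquiv γ (Sum.inl (dprodEquiv β (Sum.inl j)))) =
        dprodEquiv (dprod β γ) (Sum.inl j) := fun j => by
    apply Fin.ext
    simp only [finCongr_apply, Fin.val_cast, blockEquiv_inl_val]
    omega
  have hm : ∀ j : Fin n, finCongr (add_assoc m n r)
      (dprodEquiv γ (Sum.inl (dprodEquiv β (Sum.inr j)))) =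
        dprodEquiv (dprod β γ) (Sum.inr (dprodEquiv γ (Sum.inl j))) := fun j => by
    apply Fin.ext
    simp only [finCongr_apply, Fin.val_cast, blockEquiv_inl_val, blockEquiv_inr_val]
    split_ifs <;> omega
  have hr : ∀ i : Fin r, finCongr (add_assoc m n r) (dprodEquiv γ (Sum.inr i)) =
        dprodEquiv (dprod β γ) (Sum.inr (dprodEquiv γ (Sum.inr i))) := fun i => by
    apply Fin.ext
    simp only [finCongr_apply, Fin.val_cast, blockEquiv_inr_val]
    split_ifs <;> omega
  apply Equiv.ext
  intro x
  obtain ⟨x, rfl⟩ := (finCongr (add_assoc m n r)).surjective x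
  obtain ⟨x | i, rfl⟩ := (dprodEquiv (m := m + n) γ).surjective x
  · obtain ⟨j | j, rfl⟩ := (dprodEquiv (m := m) β).surjective x
    · rw [Equiv.permCongr_apply, Equiv.symm_apply_apply, dprod_inl, dprod_inl, hl, hl, dprod_inl]
    · rw [Equiv.permCongr_apply, Equiv.symm_apply_apply, dprod_inl, dprod_inr, hm, hm, dprod_inr,
        dprod_inl]
  · rw [Equiv.permCongr_apply, Equiv.symm_apply_apply, dprod_inr, hr, hr, dprod_inr, dprod_inr]

/-- The direct product `⊗` is stable and associative on 132-avoiding permutations. -/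
theorem dprod_avoids132_and_assoc {m n r : ℕ}
    (α : Equiv.Perm (Fin m)) (β : Equiv.Perm (Fin n)) (γ : Equiv.Perm (Fin r))
    (hα : Avoids α p132) (hβ : Avoids β p132) (hγ : Avoids γ p132) :
    Avoids (dprod α β) p132 ∧
    (finCongr (add_assoc m n r)).permCongr (dprod (dprod α β) γ) = dprod α (dprod β γ) := by
  exact ⟨avoids132_dprod hα hβ, dprod_assoc α β γ⟩
end
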